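/- Let t ≥ m ≥ 1 be integers, let q ∈ ℂ with 0 < |q| < 1, and let x ∈ ℂ with |q| < |x| < |q|^{-1}. Then q^{-t} Σ_{k_t ≥ … ≥ k_1 ≥ 0, k_m ≥ 1} (xq;q)_{k_t-1} (q/x;q)_{k_t-1} q^{k_t} Π_{i=1}^{t-1} q^{k_i^2} [ k_{i+1} - k_i - i + Σ_{j=1}^{i} (2 k_j + χ(m > j)) choose k_{i+1} - k_i ]_q = -q^{-t/2 - m/2 + 3/8} · ((xq;q)_∞ (q/x;q)_∞ / ((q;q)_∞)^2) · ( Σ_{r,s,u ≥ 0, r ≢ s (mod 2)} + Σ_{r,s,u < 0, r ≢ s (mod 2)} ) (-1)^{(r-s-1)/2} x^u q^{r^2/8 + (4t+3)rs/4 + s^2/8 + (1+m+t)r/2 + (1-m+t)s/2 + u(r+s+1)/2}, where each of the series converges absolutely. Note that for integers r ≢ s (mod 2), the quantities (r-s-1)/2 and (r+s+1)/2 are integers, and the total exponent of q in each term (including the prefactor exponent -t/2 - m/2 + 3/8) is an integer. -/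

import Mathlib

open Finset

/-- The finite q-Pochhammer symbol `(a;q)_n`. -/
noncomputable def qPoch (q a : ℂ) (n : ℕ) : ℂ := ∏ j ∈ Finset.range n, (1 - a * q ^ j)

/-- The infinite q-Pochhammer symbol `(a;q)_∞`. -/
noncomputable def qPochInf (q a : ℂ) : ℂ := ∏' j : ℕ, (1 - a * q ^ j)

/-- The Gaussian binomial coefficient `[n choose k]_q`, zero outside `0 ≤ k ≤ n`. -/
noncomputable def qBinom (q : ℂ) (n k : ℤ) : ℂ :=
  if 0 ≤ k ∧ k ≤ n then
    ∏ j ∈ Finset.range k.toNat, (1 - q ^ (n - k + (j : ℤ) + 1)) / (1 - q ^ ((j : ℤ) + 1))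
  else 0

/-- The product
`Π_{i=1}^{T-1} q^{k_i²} [k_{i+1} - k_i - i + Σ_{j=1}^{i}(2k_j + χ(M>j)) choose k_{i+1}-k_i]_q`
of the vector-valued U-function, for tuples of length `t+1`; the paper's `t, m`
are `t+1, m+1`, so `χ(M > j)` (paper `j`) becomes `χ(j < m)` for 0-based `j`. -/
noncomputable def UtProdM (q : ℂ) (t m : ℕ) (K : Fin (t+1) → ℕ) : ℂ :=
  ∏ i : Fin t, (q ^ (K i.castSucc ^ 2) *
    qBinom q ((K i.succ : ℤ) - (K i.castSucc : ℤ) - ((i : ℕ) + 1)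
        + ∑ j ∈ Finset.univ.filter (fun j : Fin (t+1) => (j : ℕ) ≤ (i : ℕ)),
            (2 * (K j : ℤ) + if (j : ℕ) < m then 1 else 0))
      ((K i.succ : ℤ) - (K i.castSucc : ℤ)))

/-- The summand of the multisum defining `U_t^{(m)}(-x;q)`. -/
noncomputable def UtTermM (q x : ℂ) (t m : ℕ) (K : Fin (t+1) → ℕ) : ℂ :=
  qPoch q (x * q) (K (Fin.last t) - 1) * qPoch q (q / x) (K (Fin.last t) - 1) *
    q ^ (K (Fin.last t)) * UtProdM q t m K

/-- The Hecke-type triple-sum summand `(-1)^{(r-s-1)/2} x^u q^{E}` where the integer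
exponent `E = r²/8 + (4T+3)rs/4 + s²/8 + (1+M+T)r/2 + (1-M+T)s/2 + u(r+s+1)/2
- T/2 - M/2 + 3/8` (the prefactor exponent `-T/2 - M/2 + 3/8` has been absorbed,
making the total exponent of `q` an integer, as noted in the statement);
`T, M` are the paper's `t, m`. -/
noncomputable def heckeTermM3 (q x : ℂ) (T M : ℤ) (p : ℤ × ℤ × ℤ) : ℂ :=
  (-1 : ℂ) ^ ((p.1 - p.2.1 - 1) / 2) * x ^ p.2.2 *
    q ^ ((p.1 ^ 2 + p.2.1 ^ 2 + 2 * (4 * T + 3) * p.1 * p.2.1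
          + 4 * (1 + M + T) * p.1 + 4 * (1 - M + T) * p.2.1 - 4 * T - 4 * M + 3
          + 4 * p.2.2 * (p.1 + p.2.1 + 1)) / 8)

/-!
The multisum is summed one variable at a time, from `k_t` down to `k_1`. Expanded in reciprocals
`1 / (q;q)_n`, each summation over a Gaussian binomial is a coefficient identity between power
series that follows from Euler's expansion of `(qy;q)_∞` and from the `q`-Vandermonde sum
underlying the Bailey lemma. Since `-i + ∑ j ≤ i, χ(m > j)` is `∑ j ≤ i, (χ(m > j) - 1)`, there are
two kinds of steps, `t - m` with `χ(m > j) = 0` and then `m - 1` with `χ(m > j) = 1`, and their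
composition exhibits the inner sum as the `β` of a Bailey pair relative to `1` whose `α_N` is, up to
a factor `(q^{2N} - 1) q^{Q(N)}` with `Q` quadratic, a partial theta sum over `-N ≤ j < N`.

The outer factor `(xq;q)_{k-1} (q/x;q)_{k-1} q^k` belongs to a conjugate Bailey pair: its sum
against the Bailey kernel telescopes. Truncating at `k_t ≤ L` thus gives a finite identity, and
`L → ∞` turns the multisum into `∑ N, c_N (1 - q^{2N}) / ((1 - x q^N) (1 - q^N / x))`. Partial
fractions and geometric expansion, valid for `|q| < |x| < |q|⁻¹`, produce two cones of triples
`(r, s, u)`, which the reflection `(r, s, u) ↦ (-1 - s, -1 - r, -1 - u)` exchanges together with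
`x ↔ x⁻¹`.
-/

section FiniteSums

theorem sum_range_convolution {R : Type*} [CommSemiring R] {f g : ℤ → R}
    (hf : ∀ l < 0, f l = 0) (hg : ∀ l < 0, g l = 0) (k : ℕ) {D M : ℕ} (hD : D < M) :
    ∑ i ∈ range M, f ((i : ℤ) - k) * g ((D : ℤ) - i) =
      if k ≤ D then PowerSeries.coeff (D - k)
        (PowerSeries.mk (fun n : ℕ => f n) * PowerSeries.mk (fun n : ℕ => g n)) else 0 := by
  split_ifs with hk
  · simp only [PowerSeries.coeff_mul, PowerSeries.coeff_mk]
    rw [Nat.sum_antidiagonal_eq_sum_range_succ (fun a b : ℕ => f a * g b),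
      ← sum_subset (range_subset_range.2 hD), show D.succ = k + (D - k + 1) by omega,
      sum_range_add, sum_eq_zero, zero_add]
    · refine sum_congr rfl fun l hl => ?_
      rw [mem_range] at hl
      congr 2 <;> omega
    · intro i hi
      rw [mem_range] at hi
      rw [hf _ (by omega), zero_mul]
    · intro i _ hi
      rw [mem_range] at hi
      rw [hg _ (by omega), mul_zero]
  · refine sum_eq_zero fun i _ => ?_
    obtain hi | hi : (i : ℤ) - k < 0 ∨ (D : ℤ) - i < 0 := by omega
    · rw [hf _ hi, zero_mul]
    · rw [hg _ hi, mul_zero]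

theorem sum_Ico_eq_zero_of_antisymm {G : Type*} [AddCommGroup G] {f : ℤ → G} {a b : ℤ}
    (hab : Even (a + b)) (hf : ∀ j, f (a + b - 1 - j) = -f j) : ∑ j ∈ Ico a b, f j = 0 := by
  obtain ⟨c, hc⟩ := hab
  refine sum_involution (fun j _ => a + b - 1 - j) (fun j _ => by rw [hf, add_neg_cancel])
    (fun j _ _ => by omega) (fun j hj => ?_) (fun j _ => by ring)
  rw [mem_Ico] at hj ⊢
  omega

theorem sum_Ico_neg_natCast {G : Type*} [AddCommMonoid G] (f : ℤ → G) (M : ℕ) :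
    ∑ j ∈ Ico (-(M : ℤ)) M, f j = ∑ n ∈ range M, (f n + f (-1 - n)) := by
  induction M with
  | zero => simp
  | succ M ih =>
    have hIco : Ico (-((M + 1 : ℕ) : ℤ)) (M + 1 : ℕ) =
        insert (M : ℤ) (insert (-1 - M : ℤ) (Ico (-(M : ℤ)) M)) := by
      ext j; simp only [mem_insert, mem_Ico]; omega
    rw [hIco, sum_insert (by simp; omega), sum_insert (by simp), ih, sum_range_succ, add_comm,
      add_comm (f (-1 - M)), add_assoc, add_comm (f (-1 - M))]

theorem sum_range_succ_mul_sub {R : Type*} [CommRing R] (S G : ℕ → R) (M : ℕ) :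
    ∑ n ∈ range M, S (n + 1) * (G n - G (n + 1)) =
      ∑ n ∈ range M, (S (n + 1) - S n) * G n + S 0 * G 0 - S M * G M := by
  induction M with
  | zero => simp
  | succ M ih => rw [sum_range_succ, sum_range_succ, ih]; ring

theorem neg_one_zpow_sub_of_odd {F : Type*} [Field F] {n : ℤ} (hn : Odd n) (j : ℤ) :
    (-1 : F) ^ (n - j) = -(-1) ^ j := by
  rw [zpow_sub₀ (neg_ne_zero.2 one_ne_zero), hn.neg_one_zpow, ← inv_mul_eq_div, ← inv_zpow,
    inv_neg_one, mul_neg_one]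

end FiniteSums

section QPochhammer

variable {F : Type*} [Field F] {q : F}

/-- The reciprocal `1 / (q;q)_n` for an integer `n`, with the standard convention that it vanishes
for `n < 0`. -/
noncomputable def invQPoch (q : F) (n : ℤ) : F :=
  if 0 ≤ n then (∏ j ∈ range n.toNat, (1 - q ^ (j + 1)))⁻¹ else 0

theorem one_sub_zpow_ne_zero (hq' : ¬ IsOfFinOrder q) {n : ℤ} (hn : n ≠ 0) : 1 - q ^ n ≠ 0 := by
  rw [sub_ne_zero]
  intro h
  refine hq' (isOfFinOrder_iff_pow_eq_one.2 ⟨n.natAbs, Int.natAbs_pos.2 hn, ?_⟩)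
  rw [← zpow_natCast]
  rcases Int.natAbs_eq n with h' | h'
  · rw [← h', h]
  · rw [show (n.natAbs : ℤ) = -n by omega, zpow_neg, ← h, inv_one]

theorem one_sub_pow_succ_ne_zero (hq' : ¬ IsOfFinOrder q) (n : ℕ) : 1 - q ^ (n + 1) ≠ 0 :=
  mod_cast one_sub_zpow_ne_zero hq' (n := (n + 1 : ℕ)) (by omega)

theorem invQPoch_of_neg {n : ℤ} (hn : n < 0) : invQPoch q n = 0 := if_neg hn.not_ge

theorem invQPoch_natCast (n : ℕ) :
    invQPoch q n = (∏ j ∈ range n, (1 - q ^ (j + 1)))⁻¹ := by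
  simp [invQPoch]

@[simp]
theorem invQPoch_zero : invQPoch q 0 = 1 := by simp [invQPoch]

theorem invQPoch_sub_one (hq' : ¬ IsOfFinOrder q) (n : ℤ) :
    invQPoch q (n - 1) = (1 - q ^ n) * invQPoch q n := by
  rcases lt_trichotomy n 0 with hn | rfl | hn
  · rw [invQPoch_of_neg hn, invQPoch_of_neg (by omega), mul_zero]
  · rw [invQPoch_of_neg (by omega), zpow_zero, sub_self, zero_mul]
  · obtain ⟨k, rfl⟩ : ∃ k : ℕ, n = (k + 1 : ℕ) := ⟨(n - 1).toNat, by omega⟩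
    rw [Nat.cast_succ, add_sub_cancel_right, ← Nat.cast_succ, invQPoch_natCast, invQPoch_natCast,
      prod_range_succ, mul_inv_rev, zpow_natCast,
      mul_inv_cancel_left₀ (one_sub_pow_succ_ne_zero hq' k)]

theorem one_sub_pow_succ_mul_invQPoch (hq' : ¬ IsOfFinOrder q) (n : ℕ) :
    (1 - q ^ (n + 1)) * invQPoch q (n + 1 : ℕ) = invQPoch q n := by
  rw [← zpow_natCast, ← invQPoch_sub_one hq', Nat.cast_succ, add_sub_cancel_right]

/-- The coefficients `(-1)^n q^{n(n+1)/2} / (q;q)_n` of Euler's expansion of `(qy;q)_∞` in powers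
of `y`. -/
noncomputable def eulerCoeff (q : F) (n : ℕ) : F :=
  (-1) ^ n * q ^ (n + 1).choose 2 * invQPoch q n

theorem one_sub_pow_succ_mul_eulerCoeff (hq' : ¬ IsOfFinOrder q) (n : ℕ) :
    (1 - q ^ (n + 1)) * eulerCoeff q (n + 1) = -q ^ (n + 1) * eulerCoeff q n := by
  have hchoose : (n + 1 + 1).choose 2 = (n + 1) + (n + 1).choose 2 := by
    rw [Nat.choose_succ_succ, Nat.choose_one_right]
  rw [eulerCoeff, eulerCoeff, hchoose, ← one_sub_pow_succ_mul_invQPoch hq' n]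
  ring

theorem q_binomial_theorem (hq' : ¬ IsOfFinOrder q) (y : F) (n : ℕ) :
    (∏ j ∈ range n, (1 - y * q ^ (j + 1))) * invQPoch q n =
      ∑ p ∈ antidiagonal n, y ^ p.1 * eulerCoeff q p.1 * invQPoch q p.2 := by
  induction n with
  | zero => simp [eulerCoeff]
  | succ n ih =>
    apply mul_left_cancel₀ (one_sub_pow_succ_ne_zero hq' n)
    have hlhs : (1 - q ^ (n + 1)) * ((∏ j ∈ range (n + 1), (1 - y * q ^ (j + 1))) *
        invQPoch q (n + 1 : ℕ)) = (1 - y * q ^ (n + 1)) *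
        ((∏ j ∈ range n, (1 - y * q ^ (j + 1))) * invQPoch q n) := by
      rw [prod_range_succ, ← one_sub_pow_succ_mul_invQPoch hq' n]; ring
    have hsplit : ∀ p ∈ antidiagonal (n + 1),
        (1 - q ^ (n + 1)) * (y ^ p.1 * eulerCoeff q p.1 * invQPoch q p.2) =
        y ^ p.1 * eulerCoeff q p.1 * ((1 - q ^ p.2) * invQPoch q p.2) +
        q ^ p.2 * y ^ p.1 * ((1 - q ^ p.1) * eulerCoeff q p.1) * invQPoch q p.2 := by
      intro p hp
      rw [← mem_antidiagonal.1 hp, pow_add]; ring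
    rw [hlhs, ih, mul_sum, mul_sum, sum_congr rfl hsplit, sum_add_distrib,
      Nat.sum_antidiagonal_succ', Nat.sum_antidiagonal_succ]
    simp only [pow_zero, sub_self, zero_mul, mul_zero, zero_add]
    rw [← sum_add_distrib]
    refine sum_congr rfl fun p hp => ?_
    rw [one_sub_pow_succ_mul_invQPoch hq', one_sub_pow_succ_mul_eulerCoeff hq',
      ← mem_antidiagonal.1 hp]
    ring

theorem mk_prod_mul_invQPoch (hq' : ¬ IsOfFinOrder q) (y : F) :
    PowerSeries.mk (fun n : ℕ => (∏ j ∈ range n, (1 - y * q ^ (j + 1))) * invQPoch q n) =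
      PowerSeries.rescale y (PowerSeries.mk (eulerCoeff q)) *
        PowerSeries.mk (fun n : ℕ => invQPoch q n) := by
  ext n
  simp [PowerSeries.coeff_mul, q_binomial_theorem hq']

theorem rescale_inv_mk_eulerCoeff_mul (hq : q ≠ 0) (hq' : ¬ IsOfFinOrder q) :
    PowerSeries.rescale q⁻¹ (PowerSeries.mk (eulerCoeff q)) *
      PowerSeries.mk (fun n : ℕ => invQPoch q n) = 1 := by
  rw [← mk_prod_mul_invQPoch hq']
  ext n
  cases n with
  | zero => simp
  | succ n => simp [prod_range_succ', PowerSeries.coeff_one, hq]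

theorem durfee_rectangle (hq : q ≠ 0) (hq' : ¬ IsOfFinOrder q) (d : ℕ) (w : ℤ) :
    ∑ p ∈ antidiagonal d, q ^ ((p.1 : ℤ) * (p.1 + w)) * invQPoch q p.1 * invQPoch q (p.1 + w) *
      invQPoch q p.2 = invQPoch q d * invQPoch q (d + w) := by
  induction d generalizing w with
  | zero => simp
  | succ d ih =>
    apply mul_left_cancel₀ (one_sub_pow_succ_ne_zero hq' d)
    have hsplit : ∀ p ∈ antidiagonal (d + 1),
        (1 - q ^ (d + 1)) * (q ^ ((p.1 : ℤ) * (p.1 + w)) * invQPoch q p.1 *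
          invQPoch q (p.1 + w) * invQPoch q p.2) =
        q ^ ((p.1 : ℤ) * (p.1 + w)) * ((1 - q ^ p.1) * invQPoch q p.1) * invQPoch q (p.1 + w) *
          invQPoch q p.2 +
        q ^ ((p.1 : ℤ) * (p.1 + w)) * q ^ p.1 * invQPoch q p.1 * invQPoch q (p.1 + w) *
          ((1 - q ^ p.2) * invQPoch q p.2) := by
      intro p hp
      rw [← mem_antidiagonal.1 hp, pow_add]; ring
    rw [← mul_assoc, one_sub_pow_succ_mul_invQPoch hq', Nat.cast_succ, add_assoc, add_comm 1 w,
      ← ih (w + 1), mul_sum, sum_congr rfl hsplit, sum_add_distrib,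
      Nat.sum_antidiagonal_succ, Nat.sum_antidiagonal_succ']
    simp only [pow_zero, sub_self, zero_mul, mul_zero, zero_add]
    rw [← sum_add_distrib]
    refine sum_congr rfl fun p _ => ?_
    have hrec := invQPoch_sub_one hq' (p.1 + (w + 1))
    rw [show (p.1 : ℤ) + (w + 1) - 1 = p.1 + w by ring] at hrec
    have hexp₁ : q ^ (((p.1 + 1 : ℕ) : ℤ) * ((p.1 + 1 : ℕ) + w)) =
        q ^ ((p.1 : ℤ) * (p.1 + (w + 1))) * q ^ ((p.1 : ℤ) + (w + 1)) := by
      rw [← zpow_add₀ hq]; congr 1; push_cast; ring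
    have hexp₂ : q ^ ((p.1 : ℤ) * (p.1 + w)) * q ^ p.1 = q ^ ((p.1 : ℤ) * (p.1 + (w + 1))) := by
      rw [← zpow_natCast, ← zpow_add₀ hq]; congr 1; ring
    rw [one_sub_pow_succ_mul_invQPoch hq', one_sub_pow_succ_mul_invQPoch hq', hexp₂, hexp₁, hrec,
      show ((p.1 + 1 : ℕ) : ℤ) + w = p.1 + (w + 1) by push_cast; ring]
    ring

end QPochhammer

section BaileyKernel

variable {F : Type*} [Field F] {q : F}

/-- The Bailey kernel `1 / ((q;q)_{s-j} (q;q)_{s+j})`: a Bailey pair relative to `1`, written with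
a bilateral `α`, is `β_s = ∑ j, α_j * baileyKernel q s j`. -/
noncomputable def baileyKernel (q : F) (s j : ℤ) : F := invQPoch q (s - j) * invQPoch q (s + j)

theorem baileyKernel_neg (s j : ℤ) : baileyKernel q s (-j) = baileyKernel q s j := by
  rw [baileyKernel, baileyKernel, mul_comm, sub_neg_eq_add, ← sub_eq_add_neg]

theorem baileyKernel_of_lt_abs {s j : ℤ} (h : s < |j|) : baileyKernel q s j = 0 := by
  rcases lt_abs.1 h with h | h
  · rw [baileyKernel, invQPoch_of_neg (by omega), zero_mul]
  · rw [baileyKernel, invQPoch_of_neg (n := s + j) (by omega), mul_zero]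

theorem baileyKernel_of_neg {s : ℤ} (hs : s < 0) (j : ℤ) : baileyKernel q s j = 0 :=
  baileyKernel_of_lt_abs (hs.trans_le (abs_nonneg j))

theorem baileyKernel_zero_left (j : ℤ) : baileyKernel q 0 j = if j = 0 then 1 else 0 := by
  split_ifs with hj
  · simp [hj, baileyKernel]
  · exact baileyKernel_of_lt_abs (abs_pos.2 hj)

theorem one_sub_zpow_sub_mul_baileyKernel (hq' : ¬ IsOfFinOrder q) (s j : ℤ) :
    (1 - q ^ (s - j)) * baileyKernel q s j = invQPoch q (s - j - 1) * invQPoch q (s + j) := by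
  rw [invQPoch_sub_one hq', baileyKernel, mul_assoc]

theorem one_sub_zpow_add_mul_baileyKernel (hq' : ¬ IsOfFinOrder q) (s j : ℤ) :
    (1 - q ^ (s + j)) * baileyKernel q s j = invQPoch q (s - j) * invQPoch q (s + j - 1) := by
  rw [invQPoch_sub_one hq', baileyKernel, mul_left_comm]

theorem baileyKernel_sub_baileyKernel_sub_one (hq : q ≠ 0) (hq' : ¬ IsOfFinOrder q) (s j : ℤ) :
    baileyKernel q s j - baileyKernel q (s - 1) j =
      q ^ s * (baileyKernel q s j * (q ^ j + q ^ (-j) - q ^ s)) := by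
  have hprev : baileyKernel q (s - 1) j =
      (1 - q ^ (s - j)) * (1 - q ^ (s + j)) * baileyKernel q s j := by
    rw [mul_assoc, one_sub_zpow_add_mul_baileyKernel hq', ← mul_assoc, ← invQPoch_sub_one hq',
      baileyKernel, sub_right_comm, ← sub_add_eq_add_sub]
  have hj : q ^ j ≠ 0 := zpow_ne_zero _ hq
  rw [hprev, zpow_sub₀ hq, zpow_add₀ hq, zpow_neg]
  field_simp
  ring

theorem sum_range_zpow_mul_baileyKernel (hq : q ≠ 0) (hq' : ¬ IsOfFinOrder q) (j : ℤ)
    {D M : ℕ} (hD : D < M) :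
    ∑ k ∈ range M, q ^ ((k : ℤ) ^ 2 - j ^ 2) * baileyKernel q k j * invQPoch q ((D : ℤ) - k) =
      baileyKernel q D j := by
  wlog hj : 0 ≤ j generalizing j
  · simpa only [baileyKernel_neg, neg_sq] using this (-j) (by omega)
  lift j to ℕ using hj
  set f : ℤ → F := fun l => q ^ (l * (l + 2 * j)) * invQPoch q l * invQPoch q (l + 2 * j) with hf
  have hf₀ : ∀ l < 0, f l = 0 := fun l hl => by simp [hf, invQPoch_of_neg hl]
  calc
    _ = ∑ k ∈ range M, f ((k : ℤ) - j) * invQPoch q ((D : ℤ) - k) := by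
      refine sum_congr rfl fun k _ => ?_
      simp only [hf, baileyKernel, ← mul_assoc]
      congr 3 <;> ring_nf
    _ = _ := by
      rw [sum_range_convolution hf₀ (fun l hl => invQPoch_of_neg hl) j hD]
      split_ifs with hjD
      · simp only [PowerSeries.coeff_mul, PowerSeries.coeff_mk, hf]
        rw [baileyKernel, show (D : ℤ) - j = (D - j : ℕ) by omega,
          show (D : ℤ) + j = (D - j : ℕ) + 2 * j by omega, ← durfee_rectangle hq hq']
      · rw [baileyKernel_of_lt_abs (by rw [Nat.abs_cast]; omega)]

theorem mk_zpow_mul_baileyKernel_mul_mk_invQPoch (hq : q ≠ 0) (hq' : ¬ IsOfFinOrder q) (j : ℤ) :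
    PowerSeries.mk (fun n : ℕ => q ^ ((n : ℤ) ^ 2 - j ^ 2) * baileyKernel q n j) *
        PowerSeries.mk (fun n : ℕ => invQPoch q n) =
      PowerSeries.mk fun n : ℕ => baileyKernel q n j := by
  ext D
  have hconv := sum_range_convolution (f := fun l => q ^ (l ^ 2 - j ^ 2) * baileyKernel q l j)
    (g := invQPoch q) (fun l hl => by rw [baileyKernel_of_neg hl, mul_zero])
    (fun l hl => invQPoch_of_neg hl) 0 D.lt_succ_self
  simp only [Nat.cast_zero, sub_zero, zero_le, if_true, tsub_zero] at hconv
  rw [← hconv, sum_range_zpow_mul_baileyKernel hq hq' j D.lt_succ_self, PowerSeries.coeff_mk]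

theorem mk_pow_mul_baileyKernel_mul_mk_eulerCoeff (hq : q ≠ 0) (hq' : ¬ IsOfFinOrder q) (j : ℤ) :
    PowerSeries.mk (fun n : ℕ => q ^ n * baileyKernel q n j) * PowerSeries.mk (eulerCoeff q) =
      PowerSeries.mk fun n : ℕ => q ^ n * (q ^ ((n : ℤ) ^ 2 - j ^ 2) * baileyKernel q n j) := by
  have hinv := congrArg (PowerSeries.rescale q) (rescale_inv_mk_eulerCoeff_mul hq hq')
  rw [map_mul, PowerSeries.rescale_rescale, inv_mul_cancel₀ hq, PowerSeries.rescale_one, map_one,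
    RingHom.id_apply, mul_comm] at hinv
  simp only [← PowerSeries.rescale_mk]
  rw [← mk_zpow_mul_baileyKernel_mul_mk_invQPoch hq hq', map_mul, mul_assoc, hinv, mul_one]

theorem mk_sum_pow_mul_baileyKernel_mul_mk_eulerCoeff (hq : q ≠ 0) (hq' : ¬ IsOfFinOrder q)
    (J : Finset ℤ) (α : ℤ → F) :
    PowerSeries.mk (fun n : ℕ => ∑ j ∈ J, α j * (q ^ n * baileyKernel q n j)) *
        PowerSeries.mk (eulerCoeff q) =
      PowerSeries.mk fun n : ℕ =>
        ∑ j ∈ J, α j * (q ^ n * (q ^ ((n : ℤ) ^ 2 - j ^ 2) * baileyKernel q n j)) := by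
  have hmk : ∀ b : ℕ → ℤ → F, PowerSeries.mk (fun n => ∑ j ∈ J, α j * b n j) =
      ∑ j ∈ J, α j • PowerSeries.mk fun n => b n j := fun b => by ext n; simp
  simp only [hmk, sum_mul, smul_mul_assoc, mk_pow_mul_baileyKernel_mul_mk_eulerCoeff hq hq']

end BaileyKernel

section BilateralSums

variable {F : Type*} [Field F] {q : F}

/-- The triangular number `j (j + 1) / 2` of an integer. -/
def triangle (j : ℤ) : ℤ := j * (j + 1) / 2

theorem two_mul_triangle (j : ℤ) : 2 * triangle j = j * (j + 1) :=
  Int.mul_ediv_cancel' (Int.even_mul_succ_self j).two_dvd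

theorem triangle_neg_one_sub (j : ℤ) : triangle (-1 - j) = triangle j := by
  linarith [two_mul_triangle j, two_mul_triangle (-1 - j)]

theorem triangle_one_sub (j : ℤ) : triangle (1 - j) = triangle j + (1 - 2 * j) := by
  linarith [two_mul_triangle j, two_mul_triangle (1 - j)]

/-- The theta coefficient `(-1)^j q^{a j(j+1)/2}`, antisymmetric under `j ↦ -1 - j`. -/
def thetaCoeff (q : F) (a j : ℤ) : F := (-1) ^ j * q ^ (a * triangle j)

theorem thetaCoeff_neg_one_sub (a j : ℤ) : thetaCoeff q a (-1 - j) = -thetaCoeff q a j := by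
  rw [thetaCoeff, thetaCoeff, neg_one_zpow_sub_of_odd (by decide), triangle_neg_one_sub, neg_mul]

theorem thetaCoeff_one_one_sub (hq : q ≠ 0) (j : ℤ) :
    thetaCoeff q 1 (1 - j) = -(thetaCoeff q 1 j * q ^ (1 - 2 * j)) := by
  rw [thetaCoeff, thetaCoeff, neg_one_zpow_sub_of_odd odd_one, triangle_one_sub, mul_add, one_mul,
    one_mul, zpow_add₀ hq, neg_mul, mul_assoc]

theorem sum_thetaCoeff_mul_baileyKernel (hq' : ¬ IsOfFinOrder q) (M : ℕ) (a s : ℤ) :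
    ∑ j ∈ Ico (-(M : ℤ)) M, thetaCoeff q a j * baileyKernel q s j =
      ∑ j ∈ Ico (-(M : ℤ)) M, thetaCoeff q a j * q ^ (s - j) * baileyKernel q s j := by
  rw [← sub_eq_zero, ← sum_sub_distrib]
  have hterm : ∀ j, thetaCoeff q a j * baileyKernel q s j -
      thetaCoeff q a j * q ^ (s - j) * baileyKernel q s j =
      thetaCoeff q a j * (invQPoch q (s - j - 1) * invQPoch q (s + j)) := fun j => by
    rw [← one_sub_zpow_sub_mul_baileyKernel hq']; ring
  simp only [hterm]
  refine sum_Ico_eq_zero_of_antisymm (by simp) fun j => ?_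
  rw [neg_add_cancel, zero_sub, thetaCoeff_neg_one_sub, mul_comm (invQPoch q _), neg_mul]
  congr 4 <;> ring

theorem sum_thetaCoeff_one_mul_baileyKernel (hq : q ≠ 0) (hq' : ¬ IsOfFinOrder q) {M : ℕ} {s : ℤ}
    (hs : s < M) :
    ∑ j ∈ Ico (-(M : ℤ)) M, thetaCoeff q 1 j * baileyKernel q s j = if s = 0 then 1 else 0 := by
  split_ifs with hs₀
  · simp only [hs₀, baileyKernel_zero_left, mul_ite, mul_one, mul_zero, sum_ite_eq']
    rw [if_pos (mem_Ico.2 ⟨by omega, by omega⟩)]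
    simp [thetaCoeff, triangle]
  have hzero : ∑ j ∈ Ico (-(M : ℤ)) M,
      thetaCoeff q 1 j * q ^ (s - j) * ((1 - q ^ (s + j)) * baileyKernel q s j) = 0 := by
    simp only [one_sub_zpow_add_mul_baileyKernel hq']
    rw [← sum_subset (Ico_subset_Ico_left (by omega : -(M : ℤ) ≤ 2 - M))]
    · refine sum_Ico_eq_zero_of_antisymm (by simp) fun j => ?_
      have hexp : q ^ (1 - 2 * j) * q ^ (s - (1 - j)) = q ^ (s - j) := by
        rw [← zpow_add₀ hq]; congr 1; ring
      rw [show 2 - (M : ℤ) + M - 1 - j = 1 - j by ring, thetaCoeff_one_one_sub hq, ← hexp,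
        show s - (1 - j) = s + j - 1 by ring, show s + (1 - j) - 1 = s - j by ring]
      ring
    · intro j hj hj'
      rw [mem_Ico] at hj hj'
      rw [invQPoch_of_neg (n := s + j - 1) (by omega), mul_zero, mul_zero]
  have hfactor : (1 - q ^ (2 * s)) * ∑ j ∈ Ico (-(M : ℤ)) M,
      thetaCoeff q 1 j * baileyKernel q s j = 0 := by
    rw [one_sub_mul, mul_sum, ← hzero]
    nth_rw 1 [sum_thetaCoeff_mul_baileyKernel hq']
    rw [← sum_sub_distrib]
    refine sum_congr rfl fun j _ => ?_
    rw [show 2 * s = s - j + (s + j) by ring, zpow_add₀ hq]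
    ring
  exact (mul_eq_zero.1 hfactor).resolve_left (one_sub_zpow_ne_zero hq' (by omega))

/-- The `β`-sequence `∑ j, (-1)^j q^{(1-2n) j(j+1)/2} / ((q;q)_{s-j} (q;q)_{s+j})`, whose
terms all lie in the range of summation if `s < M`; it gives the sum over the last `n` variables of
the multisum, those with `χ(m > j) = 0`. -/
noncomputable def thetaBeta (q : F) (M n : ℕ) (s : ℤ) : F :=
  ∑ j ∈ Ico (-(M : ℤ)) M, thetaCoeff q (1 - 2 * n) j * baileyKernel q s j

/-- The continuation of `thetaBeta q M r` through `i` further summations, those whose Gaussian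
binomials gain `χ(m > j) = 1`. -/
noncomputable def mixedThetaBeta (q : F) (M r i : ℕ) (s : ℤ) : F :=
  ∑ j ∈ Ico (-(M : ℤ)) M,
    thetaCoeff q (1 - 2 * r) j * q ^ (-j - i * j ^ 2) * (q ^ s * baileyKernel q s j)

theorem thetaBeta_of_neg (M n : ℕ) {s : ℤ} (hs : s < 0) : thetaBeta q M n s = 0 :=
  sum_eq_zero fun j _ => by rw [baileyKernel_of_neg hs, mul_zero]

theorem mixedThetaBeta_of_neg (M r i : ℕ) {s : ℤ} (hs : s < 0) : mixedThetaBeta q M r i s = 0 :=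
  sum_eq_zero fun j _ => by rw [baileyKernel_of_neg hs, mul_zero, mul_zero]

theorem thetaBeta_zero (hq : q ≠ 0) (hq' : ¬ IsOfFinOrder q) {M : ℕ} {s : ℤ} (hs : s < M) :
    thetaBeta q M 0 s = if s = 0 then 1 else 0 := by
  rw [← sum_thetaCoeff_one_mul_baileyKernel hq hq' hs, thetaBeta, Nat.cast_zero, mul_zero, sub_zero]

theorem mixedThetaBeta_zero (hq : q ≠ 0) (hq' : ¬ IsOfFinOrder q) (M r : ℕ) :
    mixedThetaBeta q M r 0 = thetaBeta q M r := by
  funext s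
  rw [mixedThetaBeta, thetaBeta, sum_thetaCoeff_mul_baileyKernel hq']
  refine sum_congr rfl fun j _ => ?_
  rw [Nat.cast_zero, zero_mul, sub_zero, zpow_sub₀ hq, zpow_neg]
  ring

theorem mk_mixedThetaBeta_mul_mk_eulerCoeff (hq : q ≠ 0) (hq' : ¬ IsOfFinOrder q) (M r i : ℕ) :
    PowerSeries.mk (fun s : ℕ => mixedThetaBeta q M r i s) * PowerSeries.mk (eulerCoeff q) =
      PowerSeries.mk fun s : ℕ => q ^ ((s : ℤ) ^ 2) * mixedThetaBeta q M r (i + 1) s := by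
  simp only [mixedThetaBeta, zpow_natCast]
  rw [mk_sum_pow_mul_baileyKernel_mul_mk_eulerCoeff hq hq']
  congr 1 with s
  rw [mul_sum]
  refine sum_congr rfl fun j _ => ?_
  have hexp : q ^ (-j - i * j ^ 2) * q ^ ((s : ℤ) ^ 2 - j ^ 2) =
      q ^ ((s : ℤ) ^ 2) * q ^ (-j - (i + 1 : ℕ) * j ^ 2) := by
    rw [← zpow_add₀ hq, ← zpow_add₀ hq]; congr 1; push_cast; ring
  linear_combination thetaCoeff q (1 - 2 * r) j * q ^ s * baileyKernel q s j * hexp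

theorem mk_thetaBeta_mul_mk_eulerCoeff (hq : q ≠ 0) (hq' : ¬ IsOfFinOrder q) (M n : ℕ) :
    PowerSeries.mk (fun s : ℕ => thetaBeta q M n s) * PowerSeries.mk (eulerCoeff q) =
      PowerSeries.mk fun s : ℕ => q ^ ((s : ℤ) ^ 2 + s) * thetaBeta q M (n + 1) s := by
  rw [← mixedThetaBeta_zero hq hq', mk_mixedThetaBeta_mul_mk_eulerCoeff hq hq']
  congr 1 with s
  rw [mixedThetaBeta, thetaBeta, mul_sum, mul_sum]
  refine sum_congr rfl fun j _ => ?_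
  have hexp : q ^ ((1 - 2 * (n : ℤ)) * triangle j) * q ^ (-j - (0 + 1 : ℕ) * j ^ 2) =
      q ^ ((1 - 2 * ((n + 1 : ℕ) : ℤ)) * triangle j) := by
    rw [← zpow_add₀ hq]; congr 1; push_cast; linear_combination two_mul_triangle j
  rw [thetaCoeff, thetaCoeff, ← hexp, zpow_add₀ hq]
  ring

/-- The partial theta sum `∑ -n ≤ j < n, (-1)^j q^{-(2t+3) j(j+1)/2 + (m+1) j}` of the
Bailey pair. -/
noncomputable def partialTheta (q : F) (t m n : ℕ) : F :=
  ∑ j ∈ Ico (-(n : ℤ)) n, thetaCoeff q (-(2 * t + 3)) j * q ^ ((m + 1) * j)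

/-- The `α`-coefficients, at index `N`, of the Bailey pair whose `β` is summed by the multisum. -/
noncomputable def baileyAlpha (q : F) (t m N : ℕ) : F :=
  (1 - q ^ (2 * (N : ℤ))) * q ^ (2 * (N : ℤ) ^ 2 - N) * partialTheta q t m N

/-- The potential `q^{2N(N-1)} / ((q;q)_{s-N} (q;q)_{s+N-1})`, whose differences in `N` let
`baileyAlpha` be summed by parts against the Bailey kernel at height `s`. -/
noncomputable def kernelPotential (q : F) (s N : ℤ) : F :=
  q ^ (2 * N * (N - 1)) * (invQPoch q (s - N) * invQPoch q (s + N - 1))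

theorem kernelPotential_one_sub (s N : ℤ) :
    kernelPotential q s (1 - N) = kernelPotential q s N := by
  rw [kernelPotential, kernelPotential, mul_comm (invQPoch q _)]
  congr 2 <;> ring_nf

theorem kernelPotential_sub_kernelPotential_add_one (hq : q ≠ 0) (hq' : ¬ IsOfFinOrder q)
    (s N : ℤ) :
    kernelPotential q s N - kernelPotential q s (N + 1) =
      (1 - q ^ (2 * N)) * q ^ (2 * N ^ 2 - N) *
        (baileyKernel q s N * (q ^ N + q ^ (-N) - q ^ s)) := by
  have hleft : kernelPotential q s N =
      q ^ (2 * N ^ 2 - N - N) * ((1 - q ^ (s + N)) * baileyKernel q s N) := by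
    rw [one_sub_zpow_add_mul_baileyKernel hq', kernelPotential]; congr 2; ring
  have hright : kernelPotential q s (N + 1) =
      q ^ (2 * N ^ 2 - N + 2 * N + N) * ((1 - q ^ (s - N)) * baileyKernel q s N) := by
    rw [one_sub_zpow_sub_mul_baileyKernel hq', kernelPotential]; congr 3 <;> ring
  have hN : q ^ N ≠ 0 := zpow_ne_zero _ hq
  rw [hleft, hright, two_mul N]
  simp only [zpow_add₀ hq, zpow_sub₀ hq, zpow_neg]
  field_simp
  ring

theorem thetaCoeff_mul_baileyKernel_mul_sub (hq : q ≠ 0) (hq' : ¬ IsOfFinOrder q) (r i : ℕ)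
    (s j : ℤ) :
    thetaCoeff q (1 - 2 * r) j * q ^ (-(i : ℤ) * j ^ 2) * (baileyKernel q s j * (q ^ j - q ^ s)) =
      thetaCoeff q (-(2 * (r + i : ℕ) + 3)) j * q ^ ((i + 1) * j) *
        kernelPotential q s (j + 1) := by
  have hkernel : baileyKernel q s j * (q ^ j - q ^ s) =
      q ^ j * (invQPoch q (s - j - 1) * invQPoch q (s + j)) := by
    have hj : q ^ j ≠ 0 := zpow_ne_zero _ hq
    rw [← one_sub_zpow_sub_mul_baileyKernel hq', zpow_sub₀ hq]
    field_simp
  have hexp : q ^ ((1 - 2 * (r : ℤ)) * triangle j) * q ^ (-(i : ℤ) * j ^ 2) * q ^ j =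
      q ^ (-(2 * ((r + i : ℕ) : ℤ) + 3) * triangle j) * q ^ (((i : ℤ) + 1) * j) *
        q ^ (2 * (j + 1) * (j + 1 - 1)) := by
    simp only [← zpow_add₀ hq]
    congr 1; push_cast; linear_combination ((i : ℤ) + 2) * two_mul_triangle j
  rw [hkernel, thetaCoeff, thetaCoeff, kernelPotential, show s - (j + 1) = s - j - 1 by ring,
    show s + (j + 1) - 1 = s + j by ring]
  linear_combination (-1) ^ j * (invQPoch q (s - j - 1) * invQPoch q (s + j)) * hexp

theorem sum_baileyAlpha_mul_baileyKernel_mul (hq : q ≠ 0) (hq' : ¬ IsOfFinOrder q) (t m : ℕ)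
    {M : ℕ} {s : ℤ} (hs : s ≤ M) :
    ∑ n ∈ range M, baileyAlpha q t m (n + 1) * (baileyKernel q s (n + 1 : ℕ) *
        (q ^ ((n + 1 : ℕ) : ℤ) + q ^ (-((n + 1 : ℕ) : ℤ)) - q ^ s)) =
      ∑ j ∈ Ico (-(M : ℤ)) M,
        thetaCoeff q (-(2 * t + 3)) j * q ^ ((m + 1) * j) * kernelPotential q s (j + 1) := by
  have hterm : ∀ n : ℕ, baileyAlpha q t m (n + 1) * (baileyKernel q s (n + 1 : ℕ) *
      (q ^ ((n + 1 : ℕ) : ℤ) + q ^ (-((n + 1 : ℕ) : ℤ)) - q ^ s)) = partialTheta q t m (n + 1) *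
      (kernelPotential q s (n + 1 : ℕ) - kernelPotential q s (n + 1 + 1 : ℕ)) := fun n => by
    rw [Nat.cast_succ (n + 1), kernelPotential_sub_kernelPotential_add_one hq hq', baileyAlpha]
    ring
  have hlast : kernelPotential q s (M + 1 : ℕ) = 0 := by
    rw [kernelPotential, invQPoch_of_neg (by push_cast; omega), zero_mul, mul_zero]
  simp only [hterm]
  rw [sum_range_succ_mul_sub _ (fun n => kernelPotential q s (n + 1 : ℕ)), hlast, mul_zero,
    sub_zero, sum_Ico_neg_natCast]
  have hzero : partialTheta q t m 0 = 0 := by simp [partialTheta]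
  rw [hzero, zero_mul, add_zero]
  refine sum_congr rfl fun n _ => ?_
  rw [partialTheta, partialTheta, sum_Ico_neg_natCast, sum_Ico_neg_natCast, sum_range_succ,
    add_sub_cancel_left, add_mul, show -1 - (n : ℤ) + 1 = 1 - (n + 1 : ℕ) by push_cast; ring,
    kernelPotential_one_sub, Nat.cast_succ]

theorem sum_range_mixedThetaBeta (hq : q ≠ 0) (hq' : ¬ IsOfFinOrder q) (r i : ℕ)
    {D M : ℕ} (hD : D < M) :
    ∑ s ∈ range (D + 1), mixedThetaBeta q M r i s =
      (∑ j ∈ Ico (-(M : ℤ)) M,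
        thetaCoeff q (1 - 2 * r) j * q ^ (-(i : ℤ) * j ^ 2) * baileyKernel q D j) -
      ∑ n ∈ range M, baileyAlpha q (r + i) i (n + 1) * baileyKernel q D (n + 1 : ℕ) := by
  set P : ℤ → F := fun s => (∑ j ∈ Ico (-(M : ℤ)) M,
    thetaCoeff q (1 - 2 * r) j * q ^ (-(i : ℤ) * j ^ 2) * baileyKernel q s j) -
    ∑ n ∈ range M, baileyAlpha q (r + i) i (n + 1) * baileyKernel q s (n + 1 : ℕ) with hP
  have hstep : ∀ s : ℤ, s ≤ M → P s - P (s - 1) = mixedThetaBeta q M r i s := by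
    intro s hs
    have hα := sum_baileyAlpha_mul_baileyKernel_mul hq hq' (r + i) i hs
    simp only [← thetaCoeff_mul_baileyKernel_mul_sub hq hq'] at hα
    simp only [hP, sub_sub_sub_comm _ _ (∑ _ ∈ Ico _ _, _), ← sum_sub_distrib, ← mul_sub,
      baileyKernel_sub_baileyKernel_sub_one hq hq', mul_left_comm _ (q ^ s), ← mul_sum, hα]
    rw [mixedThetaBeta, mul_sum]
    refine sum_congr rfl fun j _ => ?_
    rw [sub_eq_add_neg (-j), ← neg_mul, zpow_add₀ hq]
    ring
  have hbase : P (-1) = 0 := by simp [hP, baileyKernel_of_neg]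
  calc
    _ = ∑ s ∈ range (D + 1), (P ((s + 1 : ℕ) - 1) - P (s - 1)) := by
      refine sum_congr rfl fun s hs => ?_
      rw [mem_range] at hs
      rw [← hstep s (by omega), Nat.cast_succ, add_sub_cancel_right]
    _ = P D := by
      rw [sum_range_sub (fun s : ℕ => P (s - 1)), Nat.cast_zero, zero_sub, hbase, sub_zero,
        Nat.cast_succ, add_sub_cancel_right]

end BilateralSums

section BaileyTransform

variable {F : Type*} [Field F] {q : F}

/-- The transform `e ↦ (k ↦ q^{k²} ∑_{D ≥ k} e_D / (q;q)_{D-k})` of a sequence supported on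
`[0, M)`, which iterates along the variables of the multisum. -/
noncomputable def baileyTransform (q : F) (M : ℕ) (e : ℕ → F) (k : ℕ) : F :=
  q ^ ((k : ℤ) ^ 2) * ∑ D ∈ range M, e D * invQPoch q ((D : ℤ) - k)

theorem sum_baileyTransform_mul_baileyKernel (hq : q ≠ 0) (hq' : ¬ IsOfFinOrder q) (M : ℕ)
    (e : ℕ → F) (j : ℤ) :
    ∑ k ∈ range M, baileyTransform q M e k * baileyKernel q k j =
      q ^ (j ^ 2) * ∑ D ∈ range M, e D * baileyKernel q D j := by
  simp only [baileyTransform, mul_sum, sum_mul]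
  rw [sum_comm]
  refine sum_congr rfl fun D hD => ?_
  rw [← sum_range_zpow_mul_baileyKernel hq hq' j (mem_range.1 hD), mul_sum, mul_sum]
  refine sum_congr rfl fun k _ => ?_
  rw [zpow_sub₀ hq]
  field_simp

theorem sum_iterate_baileyTransform_mul_baileyKernel (hq : q ≠ 0) (hq' : ¬ IsOfFinOrder q)
    (M n : ℕ) (e : ℕ → F) (j : ℤ) :
    ∑ k ∈ range M, (baileyTransform q M)^[n] e k * baileyKernel q k j =
      q ^ (n * j ^ 2) * ∑ k ∈ range M, e k * baileyKernel q k j := by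
  induction n with
  | zero => simp
  | succ n ih =>
    rw [Function.iterate_succ_apply', sum_baileyTransform_mul_baileyKernel hq hq', ih, ← mul_assoc,
      ← zpow_add₀ hq]
    congr 2; push_cast; ring

theorem sum_iterate_baileyTransform_mul_sum (hq : q ≠ 0) (hq' : ¬ IsOfFinOrder q) (M n : ℕ)
    (e : ℕ → F) {ι : Type*} (J : Finset ι) (a : ι → F) (φ : ι → ℤ) :
    ∑ k ∈ range M, (baileyTransform q M)^[n] e k * ∑ j ∈ J, a j * baileyKernel q k (φ j) =
      ∑ j ∈ J, a j * (q ^ (n * φ j ^ 2) * ∑ k ∈ range M, e k * baileyKernel q k (φ j)) := by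
  simp only [← sum_iterate_baileyTransform_mul_baileyKernel hq hq', mul_sum]
  rw [sum_comm]
  exact sum_congr rfl fun _ _ => sum_congr rfl fun _ _ => mul_left_comm _ _ _

/-- The sum `∑_D e_D X(D - k) q^{A(D - k)}`, the closed form of the sum over all variables beyond
one with value `k` when the variables before it contribute `A` to the Gaussian binomials. -/
noncomputable def shiftedPairing (q : F) (M : ℕ) (e : ℕ → F) (X : ℤ → F) (A : ℤ) (k : ℕ) : F :=
  ∑ D ∈ range M, e D * (X ((D : ℤ) - k) * q ^ (A * ((D : ℤ) - k)))

theorem sum_range_shiftedPairing_zero {M : ℕ} (e : ℕ → F) {X : ℤ → F} (hX : ∀ s < 0, X s = 0) :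
    ∑ k ∈ range M, shiftedPairing q M e X 0 k =
      ∑ D ∈ range M, e D * ∑ s ∈ range (D + 1), X s := by
  simp only [shiftedPairing, zero_mul, zpow_zero, mul_one]
  rw [sum_comm]
  refine sum_congr rfl fun D hD => ?_
  rw [← mul_sum, ← sum_flip, ← sum_subset (range_subset_range.2 (mem_range.1 hD))]
  · refine congrArg _ (sum_congr rfl fun k hk => ?_)
    rw [Nat.cast_sub (mem_range_succ_iff.1 hk)]
  · intro k _ hk
    rw [mem_range] at hk
    exact hX _ (by omega)

end BaileyTransform

section Chains

variable {q : ℂ}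

theorem qBinom_of_neg (n : ℤ) {k : ℤ} (hk : k < 0) : qBinom q n k = 0 :=
  if_neg fun h => hk.not_ge h.1

theorem qBinom_zero_right {n : ℤ} (hn : 0 ≤ n) : qBinom q n 0 = 1 := by simp [qBinom, hn]

theorem qBinom_natCast_add (hq : q ≠ 0) {B : ℤ} (hB : 0 ≤ B) (l : ℕ) :
    qBinom q (l + B) l = (∏ j ∈ range l, (1 - q ^ B * q ^ (j + 1))) * invQPoch q l := by
  rw [qBinom, if_pos ⟨by omega, by omega⟩, Int.toNat_natCast, prod_div_distrib, invQPoch_natCast,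
    div_eq_mul_inv, add_sub_cancel_left]
  refine congr_arg₂ _ (prod_congr rfl fun j _ => ?_) (congrArg _ (prod_congr rfl fun j _ => ?_))
  · rw [add_assoc, zpow_add₀ hq]; norm_cast
  · norm_cast

theorem sum_range_qBinom_mul (hq : q ≠ 0) (hq' : ¬ IsOfFinOrder q) {B c : ℤ} (hB : 0 ≤ B)
    {X X' : ℤ → ℂ} (hX : ∀ s < 0, X s = 0) (hX' : ∀ s < 0, X' s = 0)
    (hXX' : PowerSeries.mk (fun s : ℕ => X s) * PowerSeries.mk (eulerCoeff q) =
      PowerSeries.mk fun s : ℕ => q ^ ((s : ℤ) ^ 2 - c * s) * X' s)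
    (k : ℕ) {D M : ℕ} (hD : D < M) :
    ∑ i ∈ range M, qBinom q ((i : ℤ) - k + B) ((i : ℤ) - k) *
        (X ((D : ℤ) - i) * q ^ (B * ((D : ℤ) - i))) =
      ∑ i ∈ range M, q ^ (((i : ℤ) - k) ^ 2 + (B - c) * ((i : ℤ) - k)) * X' ((i : ℤ) - k) *
        invQPoch q ((D : ℤ) - i) := by
  rw [sum_range_convolution (f := fun l => qBinom q (l + B) l) (g := fun s => X s * q ^ (B * s))
      (fun l hl => qBinom_of_neg _ hl) (fun s hs => by rw [hX s hs, zero_mul]) k hD,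
    sum_range_convolution (f := fun l => q ^ (l ^ 2 + (B - c) * l) * X' l) (g := invQPoch q)
      (fun l hl => by rw [hX' l hl, mul_zero]) (fun s hs => invQPoch_of_neg hs) k hD]
  have hg : PowerSeries.mk (fun s : ℕ => X s * q ^ (B * s)) =
      PowerSeries.rescale (q ^ B) (PowerSeries.mk fun s : ℕ => X s) := by
    rw [PowerSeries.rescale_mk]
    simp only [zpow_mul, zpow_natCast, mul_comm]
  have hh : PowerSeries.mk (fun s : ℕ => q ^ ((s : ℤ) ^ 2 + (B - c) * s) * X' s) =
      PowerSeries.rescale (q ^ B)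
        (PowerSeries.mk fun s : ℕ => q ^ ((s : ℤ) ^ 2 - c * s) * X' s) := by
    rw [PowerSeries.rescale_mk]
    congr 1 with s
    rw [← zpow_natCast, ← zpow_mul, ← mul_assoc, ← zpow_add₀ hq]
    congr 2; ring
  simp only [qBinom_natCast_add hq hB]
  rw [mk_prod_mul_invQPoch hq', hg, hh, ← hXX', map_mul (PowerSeries.rescale _),
    mul_right_comm, mul_comm (PowerSeries.rescale _ (PowerSeries.mk (eulerCoeff q)))]

/-- Summation over one variable `k' < M` of the multisum, the previous variable having the value
`k`. The accumulated shift `A` of the Gaussian binomials becomes `A + 2k + c`, with `c = 0` while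
`χ(m > j) = 1` and `c = -1` afterwards. -/
noncomputable def chainStep (q : ℂ) (M : ℕ) (c : ℤ) (V : ℤ → ℕ → ℂ) (A : ℤ) (k : ℕ) : ℂ :=
  ∑ k' ∈ range M, q ^ (k ^ 2) *
    qBinom q ((k' : ℤ) - k + (A + (2 * k + c))) ((k' : ℤ) - k) * V (A + (2 * k + c)) k'

theorem chainStep_congr {M : ℕ} {c : ℤ} {V W : ℤ → ℕ → ℂ} {A : ℤ} {k : ℕ}
    (h : ∀ k', k ≤ k' → k' < M → V (A + (2 * k + c)) k' = W (A + (2 * k + c)) k') :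
    chainStep q M c V A k = chainStep q M c W A k := by
  refine sum_congr rfl fun k' hk' => ?_
  rcases lt_or_ge k' k with hlt | hle
  · rw [qBinom_of_neg _ (by omega), mul_zero, zero_mul, zero_mul]
  · rw [h k' hle (mem_range.1 hk')]

theorem chainStep_sub (M : ℕ) (c : ℤ) (V W : ℤ → ℕ → ℂ) (A : ℤ) (k : ℕ) :
    chainStep q M c (fun A k => V A k - W A k) A k =
      chainStep q M c V A k - chainStep q M c W A k := by
  simp only [chainStep, mul_sub, sum_sub_distrib]

theorem chainStep_zero_ite {M : ℕ} (κ : ℂ) {A : ℤ} (hA : 0 ≤ A) {k : ℕ} (hk : k < M) :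
    chainStep q M 0 (fun _ k' => if k' = 0 then κ else 0) A k = if k = 0 then κ else 0 := by
  simp only [chainStep, mul_ite, mul_zero, sum_ite_eq' (range M)]
  rw [if_pos (mem_range.2 (by omega))]
  split_ifs with hk₀
  · simp [hk₀, qBinom_zero_right hA]
  · rw [qBinom_of_neg _ (by omega), mul_zero, zero_mul]

theorem chainStep_shiftedPairing (hq : q ≠ 0) (hq' : ¬ IsOfFinOrder q) (M : ℕ) {c : ℤ}
    {X X' : ℤ → ℂ} (hX : ∀ s < 0, X s = 0) (hX' : ∀ s < 0, X' s = 0)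
    (hXX' : PowerSeries.mk (fun s : ℕ => X s) * PowerSeries.mk (eulerCoeff q) =
      PowerSeries.mk fun s : ℕ => q ^ ((s : ℤ) ^ 2 - c * s) * X' s)
    (e : ℕ → ℂ) {A : ℤ} {k : ℕ} (hA : 0 ≤ A + (2 * k + c)) :
    chainStep q M c (shiftedPairing q M e X) A k =
      shiftedPairing q M (baileyTransform q M e) X' A k := by
  simp only [chainStep, shiftedPairing, baileyTransform, mul_sum, sum_mul]
  refine sum_comm.trans (Eq.trans (sum_congr rfl fun D hD => ?_) sum_comm)
  have hconv := sum_range_qBinom_mul hq hq' hA hX hX' hXX' k (mem_range.1 hD)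
  calc
    _ = q ^ ((k : ℤ) ^ 2) * e D * ∑ i ∈ range M,
        qBinom q ((i : ℤ) - k + (A + (2 * k + c))) ((i : ℤ) - k) *
          (X ((D : ℤ) - i) * q ^ ((A + (2 * k + c)) * ((D : ℤ) - i))) := by
      rw [mul_sum]
      refine sum_congr rfl fun i _ => ?_
      rw [← zpow_natCast q (k ^ 2), Nat.cast_pow]
      ring
    _ = _ := by
      rw [hconv, mul_sum]
      refine sum_congr rfl fun i _ => ?_
      have hexp : q ^ ((k : ℤ) ^ 2) *
          q ^ (((i : ℤ) - k) ^ 2 + (A + (2 * k + c) - c) * ((i : ℤ) - k)) =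
          q ^ ((i : ℤ) ^ 2) * q ^ (A * ((i : ℤ) - k)) := by
        rw [← zpow_add₀ hq, ← zpow_add₀ hq]; congr 1; ring
      linear_combination e D * X' ((i : ℤ) - k) * invQPoch q ((D : ℤ) - i) * hexp

theorem iterate_chainStep_neg_one (hq : q ≠ 0) (hq' : ¬ IsOfFinOrder q) {M : ℕ} (e : ℕ → ℂ)
    (n : ℕ) {A : ℤ} (hA : 0 ≤ A) {k : ℕ} (hk : 0 < k) (hkM : k < M) :
    (chainStep q M (-1))^[n] (fun _ => e) A k =
      shiftedPairing q M ((baileyTransform q M)^[n] e) (thetaBeta q M n) A k := by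
  induction n generalizing A k with
  | zero =>
    rw [shiftedPairing, sum_eq_single_of_mem k (mem_range.2 hkM)]
    · simp [thetaBeta_zero hq hq' (M := M) (s := 0) (by omega)]
    · intro D hD hDk
      rw [mem_range] at hD
      rw [thetaBeta_zero hq hq' (by omega), if_neg (by omega), zero_mul, mul_zero]
  | succ n ih =>
    rw [Function.iterate_succ_apply', Function.iterate_succ_apply',
      chainStep_congr fun k' hkk' hk' => ih (by omega) (by omega) hk']
    refine chainStep_shiftedPairing hq hq' M (fun _ => thetaBeta_of_neg M n)
      (fun _ => thetaBeta_of_neg M (n + 1)) ?_ _ (by omega)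
    simp only [mk_thetaBeta_mul_mk_eulerCoeff hq hq', neg_one_mul, sub_neg_eq_add]

theorem iterate_chainStep_zero (hq : q ≠ 0) (hq' : ¬ IsOfFinOrder q) {M : ℕ} (e : ℕ → ℂ)
    (r i : ℕ) {A : ℤ} (hA : 0 ≤ A) {k : ℕ} (hkA : k = 0 → A = 0) (hkM : k < M) :
    (chainStep q M 0)^[i]
        (fun A k => if k = 0 then 0 else (chainStep q M (-1))^[r] (fun _ => e) A k) A k =
      shiftedPairing q M ((baileyTransform q M)^[r + i] e) (mixedThetaBeta q M r i) A k -
        if k = 0 then shiftedPairing q M ((baileyTransform q M)^[r] e) (thetaBeta q M r) 0 0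
        else 0 := by
  induction i generalizing A k with
  | zero =>
    rw [Function.iterate_zero_apply, add_zero, mixedThetaBeta_zero hq hq']
    split_ifs with hk
    · rw [hk, hkA hk, sub_self]
    · rw [sub_zero, iterate_chainStep_neg_one hq hq' e r hA (Nat.pos_of_ne_zero hk) hkM]
  | succ i ih =>
    rw [Function.iterate_succ_apply', chainStep_congr (W := fun A k => shiftedPairing _ _ _ _ A k -
        if k = 0 then _ else 0) fun k' hkk' hk' => ih (by omega) (by omega) hk', chainStep_sub,
      chainStep_zero_ite _ (by omega) hkM, ← add_assoc,
      Function.iterate_succ_apply' (baileyTransform q M)]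
    congr 1
    refine chainStep_shiftedPairing hq hq' M (fun _ => mixedThetaBeta_of_neg M r i)
      (fun _ => mixedThetaBeta_of_neg M r (i + 1)) ?_ _ (by omega)
    simp only [mk_mixedThetaBeta_mul_mk_eulerCoeff hq hq', zero_mul, sub_zero]

theorem sum_range_iterate_chainStep (hq : q ≠ 0) (hq' : ¬ IsOfFinOrder q) (M : ℕ) (e : ℕ → ℂ)
    (r i : ℕ) :
    ∑ k ∈ range M, (chainStep q M 0)^[i]
        (fun A k => if k = 0 then 0 else (chainStep q M (-1))^[r] (fun _ => e) A k) 0 k =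
      -∑ n ∈ range M, baileyAlpha q (r + i) i (n + 1) *
        (q ^ ((r + i : ℕ) * ((n + 1 : ℕ) : ℤ) ^ 2) *
          ∑ k ∈ range M, e k * baileyKernel q k (n + 1 : ℕ)) := by
  rcases M.eq_zero_or_pos with rfl | hM
  · simp
  rw [sum_congr rfl fun k hk =>
      iterate_chainStep_zero hq hq' e r i le_rfl (fun _ => rfl) (mem_range.1 hk),
    sum_sub_distrib, sum_ite_eq', if_pos (mem_range.2 hM),
    sum_range_shiftedPairing_zero _ fun _ => mixedThetaBeta_of_neg M r i,
    sum_congr rfl fun D hD => by rw [sum_range_mixedThetaBeta hq hq' r i (mem_range.1 hD), mul_sub],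
    sum_sub_distrib, sum_iterate_baileyTransform_mul_sum hq hq',
    sum_iterate_baileyTransform_mul_sum hq hq' (φ := fun n : ℕ => ((n + 1 : ℕ) : ℤ))]
  have hlow : shiftedPairing q M ((baileyTransform q M)^[r] e) (thetaBeta q M r) 0 0 =
      ∑ j ∈ Ico (-(M : ℤ)) M, thetaCoeff q (1 - 2 * r) j *
        (q ^ (r * j ^ 2) * ∑ k ∈ range M, e k * baileyKernel q k j) := by
    rw [← sum_iterate_baileyTransform_mul_sum hq hq']
    simp only [shiftedPairing, thetaBeta, Nat.cast_zero, sub_zero, zero_mul, zpow_zero, mul_one]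
  rw [hlow, sub_right_comm, sub_eq_neg_self, sub_eq_zero]
  refine sum_congr rfl fun j _ => ?_
  have hexp : q ^ (-(i : ℤ) * j ^ 2) * q ^ (((r + i : ℕ) : ℤ) * j ^ 2) = q ^ (r * j ^ 2) := by
    rw [← zpow_add₀ hq]; congr 1; push_cast; ring
  rw [← hexp]
  ring

end Chains

section Multisum

variable {q x : ℂ}

theorem sum_piFinset_fin_succ {n : ℕ} (R : Finset ℕ) (f : (Fin (n + 1) → ℕ) → ℂ) :
    ∑ K ∈ Fintype.piFinset (fun _ : Fin (n + 1) => R), f K =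
      ∑ k ∈ R, ∑ K ∈ Fintype.piFinset (fun _ : Fin n => R), f (Fin.cons k K) := by
  rw [← sum_product']
  refine (sum_equiv (Fin.consEquiv fun _ => ℕ) (fun p => ?_) fun _ _ => rfl).symm
  simp [Fin.consEquiv, Fin.forall_fin_succ]

/-- The weight `∏ i, q^{k_i²} [ ⋯ ]_q` of the multisum, with an initial shift `A` of the Gaussian
binomials and with `χ(m > j) - 1` replaced by an arbitrary sequence `c`. -/
noncomputable def chainWeight (q : ℂ) {n : ℕ} (c : ℕ → ℤ) (A : ℤ) (K : Fin (n + 1) → ℕ) : ℂ :=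
  ∏ i : Fin n, (q ^ (K i.castSucc ^ 2) *
    qBinom q ((K i.succ : ℤ) - K i.castSucc +
        (A + ∑ j : Fin (n + 1), if (j : ℕ) ≤ i then 2 * (K j : ℤ) + c j else 0))
      ((K i.succ : ℤ) - K i.castSucc))

theorem chainWeight_cons {n : ℕ} (c : ℕ → ℤ) (A : ℤ) (k : ℕ) (K : Fin (n + 1) → ℕ) :
    chainWeight q c A (Fin.cons k K : Fin (n + 2) → ℕ) =
      q ^ (k ^ 2) * qBinom q ((K 0 : ℤ) - k + (A + (2 * k + c 0))) ((K 0 : ℤ) - k) *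
        chainWeight q (fun j => c (j + 1)) (A + (2 * k + c 0)) K := by
  rw [chainWeight, Fin.prod_univ_succ, chainWeight]
  congr 1
  · simp
  · refine prod_congr rfl fun i _ => ?_
    rw [Fin.sum_univ_succ]
    simp [add_assoc]

theorem UtProdM_eq_chainWeight (t m : ℕ) (K : Fin (t + 1) → ℕ) :
    UtProdM q t m K = chainWeight q (fun j => if j < m then 0 else -1) 0 K := by
  refine prod_congr rfl fun i _ => ?_
  have hcard : ((i : ℕ) : ℤ) + 1 = ∑ j : Fin (t + 1), if (j : ℕ) ≤ i then (1 : ℤ) else 0 := by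
    have : (univ.filter fun j : Fin (t + 1) => (j : ℕ) ≤ i) = Iic i.castSucc := by
      ext j; simp [Fin.le_def]
    rw [← sum_filter, this, sum_const, Fin.card_Iic]
    simp
  rw [sum_filter, zero_add, hcard, sub_add, ← sum_sub_distrib, sub_eq_add_neg, ← sum_neg_distrib]
  congr 3
  refine sum_congr rfl fun j _ => ?_
  dsimp only
  split_ifs <;> ring

theorem sum_chainWeight_cons_succ {n : ℕ} (M : ℕ) (c : ℕ → ℤ) (H : (Fin (n + 1) → ℕ) → ℂ)
    (A : ℤ) (k : ℕ) :
    ∑ K ∈ Fintype.piFinset (fun _ : Fin (n + 1) => range M),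
        chainWeight q c A (Fin.cons k K : Fin (n + 2) → ℕ) * H K =
      chainStep q M (c 0) (fun A k => ∑ K ∈ Fintype.piFinset (fun _ : Fin n => range M),
        chainWeight q (fun j => c (j + 1)) A (Fin.cons k K : Fin (n + 1) → ℕ) *
          H (Fin.cons k K)) A k := by
  rw [sum_piFinset_fin_succ, chainStep]
  refine sum_congr rfl fun k' _ => ?_
  rw [mul_sum]
  refine sum_congr rfl fun K _ => ?_
  rw [chainWeight_cons, Fin.cons_zero, mul_assoc]

theorem sum_chainWeight_neg_one (M : ℕ) (e : ℕ → ℂ) (n : ℕ) (A : ℤ) (k : ℕ) :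
    ∑ K ∈ Fintype.piFinset (fun _ : Fin n => range M),
        chainWeight q (fun _ => -1) A (Fin.cons k K : Fin (n + 1) → ℕ) *
          e ((Fin.cons k K : Fin (n + 1) → ℕ) (Fin.last n)) =
      (chainStep q M (-1))^[n] (fun _ => e) A k := by
  induction n generalizing A k with
  | zero => simp [chainWeight]
  | succ n ih =>
    simp only [← Fin.succ_last, Fin.cons_succ]
    rw [sum_chainWeight_cons_succ M _ (fun K => e (K (Fin.last n))), Function.iterate_succ_apply']
    simp only [ih]

theorem sum_chainWeight_ite (M : ℕ) (e : ℕ → ℂ) (r i : ℕ) (A : ℤ) (k : ℕ) :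
    ∑ K ∈ Fintype.piFinset (fun _ : Fin (r + i) => range M),
        chainWeight q (fun j => if j < i then 0 else -1) A (Fin.cons k K : Fin (r + i + 1) → ℕ) *
          (if (Fin.cons k K : Fin (r + i + 1) → ℕ) ⟨i, by omega⟩ = 0 then 0
            else e ((Fin.cons k K : Fin (r + i + 1) → ℕ) (Fin.last (r + i)))) =
      (chainStep q M 0)^[i]
        (fun A k => if k = 0 then 0 else (chainStep q M (-1))^[r] (fun _ => e) A k) A k := by
  induction i generalizing A k with
  | zero =>
    rw [Function.iterate_zero_apply, ← sum_chainWeight_neg_one]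
    split_ifs with hk <;> simp [hk]
  | succ i ih =>
    have hsucc : (⟨i + 1, by omega⟩ : Fin (r + (i + 1) + 1)) =
      (⟨i, by omega⟩ : Fin (r + i + 1)).succ := rfl
    have hlast : Fin.last (r + (i + 1)) = (Fin.last (r + i)).succ := rfl
    simp only [hsucc, hlast, Fin.cons_succ]
    refine (sum_chainWeight_cons_succ M _ (fun K : Fin (r + i + 1) → ℕ =>
      if K ⟨i, by omega⟩ = 0 then 0 else e (K (Fin.last (r + i)))) A k).trans ?_
    rw [Function.iterate_succ_apply']
    simp only [add_lt_add_iff_right, ih, Nat.zero_lt_succ, if_true]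

theorem sum_box_UtProdM (hq : q ≠ 0) (hq' : ¬ IsOfFinOrder q) (M : ℕ) (e : ℕ → ℂ) {t m : ℕ}
    (hmt : m ≤ t) :
    ∑ K ∈ Fintype.piFinset (fun _ : Fin (t + 1) => range M),
        (if 1 ≤ K ⟨m, Nat.lt_add_one_of_le hmt⟩ then e (K (Fin.last t)) * UtProdM q t m K else 0) =
      -∑ n ∈ range M, baileyAlpha q t m (n + 1) * (q ^ ((t : ℤ) * ((n + 1 : ℕ) : ℤ) ^ 2) *
        ∑ k ∈ range M, e k * baileyKernel q k (n + 1 : ℕ)) := by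
  obtain ⟨r, rfl⟩ := Nat.exists_eq_add_of_le' hmt
  rw [← sum_range_iterate_chainStep hq hq', sum_piFinset_fin_succ]
  refine sum_congr rfl fun k _ => ?_
  rw [← sum_chainWeight_ite]
  refine sum_congr rfl fun K _ => ?_
  rw [UtProdM_eq_chainWeight]
  split_ifs with h₁ h₀ h₀
  · omega
  · rw [mul_comm]
  · rw [mul_zero]
  · omega

theorem qPoch_succ (q a : ℂ) (n : ℕ) : qPoch q a (n + 1) = qPoch q a n * (1 - a * q ^ n) :=
  prod_range_succ _ _

/-- The conjugate Bailey pair relative to `a = 1`: the sum telescopes, because with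
`w = q ^ (L + 1)` and `z = q ^ N` one has
`(1 - x w) (1 - w / x) - (1 - w z) (1 - w / z) = w (z + 1 / z - x - 1 / x)`. -/
theorem sum_range_qPoch_mul_baileyKernel (hq : q ≠ 0) (hq' : ¬ IsOfFinOrder q) (hx : x ≠ 0)
    {N : ℕ} (hN : 0 < N) (h₁ : 1 - x * q ^ N ≠ 0) (h₂ : 1 - x⁻¹ * q ^ N ≠ 0) (L : ℕ) :
    ∑ k ∈ range (L + 1), qPoch q (x * q) (k - 1) * qPoch q (q / x) (k - 1) * q ^ k *
        baileyKernel q k N =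
      q ^ N / ((1 - x * q ^ N) * (1 - x⁻¹ * q ^ N)) *
        (qPoch q (x * q) L * qPoch q (q / x) L * baileyKernel q L N) := by
  induction L with
  | zero => simp [baileyKernel_of_lt_abs (q := q) (s := 0) (j := N) (by simpa using hN)]
  | succ L ih =>
    have hz : q ^ N ≠ 0 := pow_ne_zero _ hq
    have hdiff := baileyKernel_sub_baileyKernel_sub_one hq hq' (L + 1) N
    rw [add_sub_cancel_right, zpow_neg, zpow_natCast, ← Nat.cast_succ, zpow_natCast] at hdiff
    rw [sum_range_succ, ih, Nat.add_sub_cancel, qPoch_succ, qPoch_succ,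
      show x * q * q ^ L = x * q ^ (L + 1) by ring,
      show q / x * q ^ L = x⁻¹ * q ^ (L + 1) by ring]
    have hfac : q ^ N / ((1 - x * q ^ N) * (1 - x⁻¹ * q ^ N)) *
        (q ^ N + (q ^ N)⁻¹ - x - x⁻¹) = 1 := by
      rw [div_mul_eq_mul_div, div_eq_one_iff_eq (mul_ne_zero h₁ h₂)]
      field_simp
      ring
    have hxx : x * x⁻¹ = 1 := mul_inv_cancel₀ hx
    generalize q ^ N / ((1 - x * q ^ N) * (1 - x⁻¹ * q ^ N)) = c at hfac ⊢
    generalize q ^ N + (q ^ N)⁻¹ = y at hfac hdiff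
    generalize q ^ (L + 1) = w at hdiff ⊢
    generalize baileyKernel q (L + 1 : ℕ) N = B at hdiff ⊢
    linear_combination qPoch q (x * q) L * qPoch q (q / x) L *
      (-c * hdiff - w * B * hfac - c * B * w ^ 2 * hxx)

/-- The coefficients of the single-sum expansion of the multisum as a combination of
Appell-Lerch-type terms with poles at `x = q ^ (± (n + 1))`. -/
noncomputable def appellCoeff (q x : ℂ) (t m n : ℕ) : ℂ :=
  q ^ (((t : ℤ) + 2) * ((n + 1 : ℕ) : ℤ) ^ 2) * partialTheta q t m (n + 1) *
    ((1 - q ^ (2 * (n + 1))) / ((1 - x * q ^ (n + 1)) * (1 - x⁻¹ * q ^ (n + 1))))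

theorem sum_box_UtTermM (hq : q ≠ 0) (hq' : ¬ IsOfFinOrder q) (hx : x ≠ 0)
    (h₁ : ∀ n : ℕ, 1 - x * q ^ (n + 1) ≠ 0) (h₂ : ∀ n : ℕ, 1 - x⁻¹ * q ^ (n + 1) ≠ 0)
    {t m : ℕ} (hmt : m ≤ t) (L : ℕ) :
    ∑ K ∈ Fintype.piFinset (fun _ : Fin (t + 1) => range (L + 1)),
        (if 1 ≤ K ⟨m, Nat.lt_add_one_of_le hmt⟩ then UtTermM q x t m K else 0) =
      -(qPoch q (x * q) L * qPoch q (q / x) L *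
        ∑ n ∈ range (L + 1), appellCoeff q x t m n * baileyKernel q L (n + 1 : ℕ)) := by
  refine (sum_box_UtProdM hq hq' (L + 1)
    (fun k => qPoch q (x * q) (k - 1) * qPoch q (q / x) (k - 1) * q ^ k) hmt).trans ?_
  rw [mul_sum]
  congr 1
  refine sum_congr rfl fun n _ => ?_
  rw [sum_range_qPoch_mul_baileyKernel hq hq' hx n.succ_pos (h₁ n) (h₂ n), baileyAlpha, appellCoeff]
  have hexp : q ^ (2 * ((n + 1 : ℕ) : ℤ) ^ 2 - (n + 1 : ℕ)) *
      q ^ ((t : ℤ) * ((n + 1 : ℕ) : ℤ) ^ 2) * q ^ (n + 1) =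
      q ^ (((t : ℤ) + 2) * ((n + 1 : ℕ) : ℤ) ^ 2) := by
    rw [← zpow_natCast q (n + 1), ← zpow_add₀ hq, ← zpow_add₀ hq]; congr 1; ring
  have hsq : q ^ (2 * ((n + 1 : ℕ) : ℤ)) = q ^ (2 * (n + 1)) := mod_cast zpow_natCast q _
  rw [Nat.succ_eq_add_one, hsq, ← hexp]
  ring

end Multisum

section Convergence

open Filter Topology

theorem summable_norm_neg_mul_pow {q : ℂ} (hq₁ : ‖q‖ < 1) (a : ℂ) :
    Summable fun j : ℕ => ‖-(a * q ^ j)‖ := by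
  simpa only [norm_neg, norm_mul, norm_pow] using
    (summable_geometric_of_lt_one (norm_nonneg _) hq₁).mul_left ‖a‖

theorem tendsto_qPoch {q : ℂ} (hq₁ : ‖q‖ < 1) (a : ℂ) :
    Tendsto (qPoch q a) atTop (𝓝 (qPochInf q a)) := by
  simpa only [funext (qPoch.eq_1 q a), qPochInf, sub_eq_add_neg] using
    (multipliable_one_add_of_summable (summable_norm_neg_mul_pow hq₁ a)).hasProd.tendsto_prod_nat

theorem exists_norm_qPoch_le {q : ℂ} (hq₁ : ‖q‖ < 1) (a : ℂ) : ∃ C, ∀ n, ‖qPoch q a n‖ ≤ C := by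
  obtain ⟨C, hC⟩ := (tendsto_qPoch hq₁ a).norm.bddAbove_range
  exact ⟨C, fun n => hC ⟨n, rfl⟩⟩

theorem norm_mul_pow_succ_lt_one {a q : ℂ} (hq₁ : ‖q‖ < 1) (ha : ‖a‖ * ‖q‖ < 1) (n : ℕ) :
    ‖a * q ^ (n + 1)‖ < 1 :=
  calc
    ‖a * q ^ (n + 1)‖ = ‖q‖ ^ n * (‖a‖ * ‖q‖) := by rw [norm_mul, norm_pow]; ring
    _ ≤ 1 * (‖a‖ * ‖q‖) := by gcongr; exact pow_le_one₀ (norm_nonneg _) hq₁.le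
    _ < 1 := by rwa [one_mul]

theorem one_sub_ne_zero_of_norm_lt_one {a : ℂ} (ha : ‖a‖ < 1) : 1 - a ≠ 0 := by
  rw [sub_ne_zero]
  rintro rfl
  simp at ha

theorem qPochInf_self_ne_zero {q : ℂ} (hq₁ : ‖q‖ < 1) : qPochInf q q ≠ 0 := by
  have hne (j : ℕ) : 1 + -(q * q ^ j) ≠ 0 := by
    rw [← sub_eq_add_neg, ← pow_succ', ← one_mul (q ^ (j + 1))]
    exact one_sub_ne_zero_of_norm_lt_one (norm_mul_pow_succ_lt_one hq₁ (by simpa using hq₁) j)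
  simpa only [qPochInf, sub_eq_add_neg] using
    tprod_one_add_ne_zero_of_summable hne (summable_norm_neg_mul_pow hq₁ q)

variable {q : ℂ}

theorem invQPoch_natCast_eq_inv_qPoch (n : ℕ) : invQPoch q n = (qPoch q q n)⁻¹ := by
  simp only [invQPoch_natCast, qPoch, pow_succ']

theorem tendsto_invQPoch (hq₁ : ‖q‖ < 1) : Tendsto (invQPoch q) atTop (𝓝 (qPochInf q q)⁻¹) := by
  rw [← Nat.map_cast_int_atTop, tendsto_map'_iff]
  exact ((tendsto_qPoch hq₁ q).inv₀ (qPochInf_self_ne_zero hq₁)).congr fun n =>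
    (invQPoch_natCast_eq_inv_qPoch n).symm

theorem exists_norm_invQPoch_le (hq₁ : ‖q‖ < 1) : ∃ C, ∀ n : ℤ, ‖invQPoch q n‖ ≤ C := by
  obtain ⟨C, hC⟩ := ((tendsto_invQPoch hq₁).comp tendsto_natCast_atTop_atTop).norm.bddAbove_range
  refine ⟨C, fun n => ?_⟩
  rcases lt_or_ge n 0 with hn | hn
  · rw [invQPoch_of_neg hn, norm_zero]
    exact (norm_nonneg _).trans (hC ⟨0, rfl⟩)
  · lift n to ℕ using hn
    exact hC ⟨n, rfl⟩

theorem qBinom_natCast_add_natCast (hq : q ≠ 0) (hq' : ¬ IsOfFinOrder q) (B l : ℕ) :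
    qBinom q (l + B) l = qPoch q q (B + l) * invQPoch q B * invQPoch q l := by
  have hB : qPoch q q B ≠ 0 := prod_ne_zero_iff.2 fun j _ => by
    simpa only [pow_succ'] using one_sub_pow_succ_ne_zero hq' j
  rw [qBinom_natCast_add hq (Int.natCast_nonneg B), invQPoch_natCast_eq_inv_qPoch B, qPoch,
    prod_range_add, ← qPoch, mul_comm (qPoch q q B), mul_inv_cancel_right₀ hB]
  congr 1
  exact prod_congr rfl fun j _ => by rw [zpow_natCast]; ring

theorem exists_norm_qBinom_le (hq : q ≠ 0) (hq₁ : ‖q‖ < 1) :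
    ∃ C, ∀ n k : ℤ, ‖qBinom q n k‖ ≤ C := by
  obtain ⟨C, hC⟩ := exists_norm_invQPoch_le hq₁
  obtain ⟨C', hC'⟩ := exists_norm_qPoch_le hq₁ q
  have hC₀ : 0 ≤ C := (norm_nonneg _).trans (hC 0)
  have hC'₀ : 0 ≤ C' := (norm_nonneg _).trans (hC' 0)
  refine ⟨C' * C * C, fun n k => ?_⟩
  by_cases hk : 0 ≤ k ∧ k ≤ n
  · obtain ⟨l, rfl⟩ := Int.eq_ofNat_of_zero_le hk.1
    obtain ⟨B, hB⟩ := Int.eq_ofNat_of_zero_le (sub_nonneg.2 hk.2)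
    rw [sub_eq_iff_eq_add'.1 hB,
      qBinom_natCast_add_natCast hq fun h => hq₁.ne h.norm_eq_one, norm_mul, norm_mul]
    gcongr <;> apply_assumption
  · rw [qBinom, if_neg hk, norm_zero]
    positivity

theorem summable_prod_pow {ρ : ℝ} (h₀ : 0 ≤ ρ) (h₁ : ρ < 1) (n : ℕ) :
    Summable fun K : Fin n → ℕ => ∏ i, ρ ^ K i := by
  induction n with
  | zero => exact (hasSum_fintype _).summable
  | succ n ih =>
    rw [← (Fin.consEquiv fun _ : Fin (n + 1) => ℕ).summable_iff]
    refine ((summable_geometric_of_lt_one h₀ h₁).mul_of_nonneg ih (fun _ => by positivity)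
      fun _ => by positivity).congr fun p => ?_
    simp [Fin.prod_univ_succ, Fin.consEquiv]

theorem summable_norm_UtTermM (hq : q ≠ 0) (hq₁ : ‖q‖ < 1) (x : ℂ) (t m : ℕ) :
    Summable fun K : Fin (t + 1) → ℕ => ‖UtTermM q x t m K‖ := by
  obtain ⟨C₁, hC₁⟩ := exists_norm_qPoch_le hq₁ (x * q)
  obtain ⟨C₂, hC₂⟩ := exists_norm_qPoch_le hq₁ (q / x)
  obtain ⟨C, hC⟩ := exists_norm_qBinom_le hq hq₁
  have hC₁₀ : 0 ≤ C₁ := (norm_nonneg _).trans (hC₁ 0)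
  have hC₂₀ : 0 ≤ C₂ := (norm_nonneg _).trans (hC₂ 0)
  refine .of_nonneg_of_le (fun _ => norm_nonneg _) (fun K => ?_)
    ((summable_prod_pow (norm_nonneg q) hq₁ (t + 1)).mul_left (C₁ * C₂ * C ^ t))
  have hprod : ‖UtProdM q t m K‖ ≤ ∏ i : Fin t, (‖q‖ ^ K i.castSucc * C) := by
    rw [UtProdM, norm_prod]
    refine prod_le_prod (fun _ _ => norm_nonneg _) fun i _ => ?_
    rw [norm_mul, norm_pow]
    refine mul_le_mul ?_ (hC _ _) (norm_nonneg _) (by positivity)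
    exact pow_le_pow_of_le_one (norm_nonneg q) hq₁.le (Nat.le_self_pow two_ne_zero _)
  rw [prod_mul_distrib, prod_const, card_univ, Fintype.card_fin] at hprod
  calc
    ‖UtTermM q x t m K‖
      ≤ C₁ * C₂ * ‖q‖ ^ K (Fin.last t) * ((∏ i : Fin t, ‖q‖ ^ K i.castSucc) * C ^ t) := by
        rw [UtTermM, norm_mul, norm_mul, norm_mul, norm_pow]
        gcongr <;> apply_assumption
    _ = C₁ * C₂ * C ^ t * ∏ i, ‖q‖ ^ K i := by rw [Fin.prod_univ_castSucc]; ring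

theorem UtProdM_eq_zero {t : ℕ} (m : ℕ) {K : Fin (t + 1) → ℕ} {i : Fin t}
    (hi : K i.succ < K i.castSucc) : UtProdM q t m K = 0 := by
  refine prod_eq_zero (mem_univ i) ?_
  rw [qBinom_of_neg _ (by omega), mul_zero]

theorem indicator_UtTermM (q x : ℂ) {t : ℕ} (m : ℕ) (j : Fin (t + 1)) (K : Fin (t + 1) → ℕ) :
    {K : Fin (t + 1) → ℕ | (∀ i : Fin t, K i.castSucc ≤ K i.succ) ∧ 1 ≤ K j}.indicator
      (UtTermM q x t m) K = if 1 ≤ K j then UtTermM q x t m K else 0 := by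
  rw [Set.indicator_apply]
  simp only [Set.mem_ofPred_eq]
  by_cases hK : ∀ i : Fin t, K i.castSucc ≤ K i.succ
  · simp only [hK, implies_true, true_and]
  · obtain ⟨i, hi⟩ := not_forall.1 hK
    rw [UtTermM, UtProdM_eq_zero m (not_le.1 hi), mul_zero, ite_self, ite_self]

theorem tendsto_piFinset_range_atTop (n : ℕ) :
    Tendsto (fun L => Fintype.piFinset fun _ : Fin n => range (L + 1)) atTop atTop := by
  refine tendsto_atTop_finset_of_monotone
    (fun a b hab => Fintype.piFinset_subset _ _ fun _ => range_mono (by omega)) fun K => ?_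
  refine ⟨∑ i, K i, Fintype.mem_piFinset.2 fun i => mem_range_succ_iff.2 ?_⟩
  exact single_le_sum (fun _ _ => Nat.zero_le _) (mem_univ i)

theorem tendsto_sum_box_UtTermM (hq : q ≠ 0) (hq₁ : ‖q‖ < 1) (x : ℂ) {t : ℕ} (m : ℕ)
    (j : Fin (t + 1)) :
    Tendsto (fun L => ∑ K ∈ Fintype.piFinset (fun _ : Fin (t + 1) => range (L + 1)),
        if 1 ≤ K j then UtTermM q x t m K else 0) atTop
      (𝓝 (∑' K : {K : Fin (t + 1) → ℕ // (∀ i : Fin t, K i.castSucc ≤ K i.succ) ∧ 1 ≤ K j},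
        UtTermM q x t m K.1)) := by
  have hsum := ((summable_norm_UtTermM hq hq₁ x t m).of_norm.indicator
    {K | (∀ i : Fin t, K i.castSucc ≤ K i.succ) ∧ 1 ≤ K j}).hasSum
  rw [← _root_.tsum_subtype] at hsum
  exact (hsum.comp (tendsto_piFinset_range_atTop _)).congr fun L =>
    sum_congr rfl fun K _ => indicator_UtTermM q x m j K

theorem tendsto_baileyKernel (hq₁ : ‖q‖ < 1) (j : ℤ) :
    Tendsto (fun s => baileyKernel q s j) atTop (𝓝 ((qPochInf q q ^ 2)⁻¹)) := by
  rw [sq, mul_inv]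
  exact ((tendsto_invQPoch hq₁).comp (tendsto_atTop_add_const_right _ (-j) tendsto_id)).mul
    ((tendsto_invQPoch hq₁).comp (tendsto_atTop_add_const_right _ j tendsto_id))

theorem tendsto_sum_mul_baileyKernel (hq₁ : ‖q‖ < 1) {a : ℕ → ℂ} (ha : Summable a) :
    Tendsto (fun L => ∑ n ∈ range (L + 1), a n * baileyKernel q L (n + 1 : ℕ)) atTop
      (𝓝 ((∑' n, a n) * (qPochInf q q ^ 2)⁻¹)) := by
  obtain ⟨C, hC⟩ := exists_norm_invQPoch_le hq₁
  rw [← tsum_mul_right]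
  refine (tendsto_tsum_of_dominated_convergence (bound := fun n => ‖a n‖ * (C * C))
    (ha.norm.mul_right _) (fun n => ((tendsto_baileyKernel hq₁ (n + 1 : ℕ)).comp
      tendsto_natCast_atTop_atTop).const_mul _) (.of_forall fun L n => ?_)).congr fun L =>
      tsum_eq_sum fun n hn => ?_
  · rw [norm_mul, Function.comp_apply, baileyKernel, norm_mul]
    have hC₀ : 0 ≤ C := (norm_nonneg _).trans (hC 0)
    gcongr <;> apply_assumption
  · rw [mem_range] at hn
    rw [baileyKernel_of_lt_abs, mul_zero]
    rw [Nat.abs_cast]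
    omega

end Convergence

section HeckeSums

variable {q x : ℂ} {t m : ℕ}

/-- The index set `r, s, u ≥ 0`, `r ≢ s (mod 2)` of the first Hecke-type sum. -/
abbrev NonnegTriple : Type :=
  {p : ℤ × ℤ × ℤ // (0 ≤ p.1 ∧ 0 ≤ p.2.1 ∧ 0 ≤ p.2.2) ∧ p.1 % 2 ≠ p.2.1 % 2}

/-- The index set `r, s, u < 0`, `r ≢ s (mod 2)` of the second Hecke-type sum. -/
abbrev NegTriple : Type :=
  {p : ℤ × ℤ × ℤ // (p.1 < 0 ∧ p.2.1 < 0 ∧ p.2.2 < 0) ∧ p.1 % 2 ≠ p.2.1 % 2}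

/-- The reflection `(r, s, u) ↦ (-1 - s, -1 - r, -1 - u)`, under which the two Hecke-type sums
correspond to each other up to replacing `x` by `x⁻¹`. -/
def NonnegTriple.reflectEquiv : NonnegTriple ≃ NegTriple where
  toFun p := ⟨(-1 - p.1.2.1, -1 - p.1.1, -1 - p.1.2.2), by grind⟩
  invFun p := ⟨(-1 - p.1.2.1, -1 - p.1.1, -1 - p.1.2.2), by grind⟩
  left_inv p := by ext <;> simp
  right_inv p := by ext <;> simp

theorem heckeTermM3_reflect (q x : ℂ) (T M r s u : ℤ) :
    heckeTermM3 q x T M (-1 - s, -1 - r, -1 - u) = heckeTermM3 q x⁻¹ T M (r, s, u + 1) := by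
  simp only [heckeTermM3, inv_zpow', sub_sub_sub_cancel_left]
  congr 3 <;> ring_nf

/-- The parametrization `r = n + 1 + j`, `s = n - j` of the pairs `r, s ≥ 0` of opposite parity by
`n = (r + s - 1) / 2` and `j = (r - s - 1) / 2`. -/
def NonnegTriple.ofSigma (a : Σ n : ℕ, Ico (-((n + 1 : ℕ) : ℤ)) (n + 1 : ℕ) × ℕ) : NonnegTriple :=
  ⟨((a.1 + 1 : ℕ) + (a.2.1 : ℤ), (a.1 + 1 : ℕ) - 1 - (a.2.1 : ℤ), a.2.2), by
    have := mem_Ico.1 a.2.1.2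
    dsimp only
    omega⟩

theorem NonnegTriple.bijective_ofSigma : Function.Bijective ofSigma := by
  constructor
  · rintro ⟨n, ⟨j, hj⟩, u⟩ ⟨n', ⟨j', hj'⟩, u'⟩ h
    simp only [ofSigma, Subtype.mk.injEq, Prod.mk.injEq] at h
    obtain rfl : n = n' := by omega
    obtain rfl : j = j' := by omega
    obtain rfl : u = u' := by omega
    rfl
  · rintro ⟨⟨r, s, u⟩, ⟨hr, hs, hu⟩, hrs⟩
    dsimp only at hr hs hu hrs
    refine ⟨⟨((r + s) / 2).toNat, ⟨(r - s - 1) / 2, mem_Ico.2 (by omega)⟩, u.toNat⟩, ?_⟩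
    simp only [ofSigma, Subtype.mk.injEq, Prod.mk.injEq]
    omega

theorem heckeTermM3_add_sub (hq : q ≠ 0) (N j : ℤ) (u : ℕ) :
    heckeTermM3 q x (t + 1) (m + 1) (N + j, N - 1 - j, u) =
      q ^ ((t + 2) * N ^ 2 - (t + 1)) * (thetaCoeff q (-(2 * t + 3)) j * q ^ ((m + 1) * j)) *
        (x * q ^ N) ^ u := by
  have hsign : (N + j - (N - 1 - j) - 1) / 2 = j := by omega
  have hexp : (N + j) ^ 2 + (N - 1 - j) ^ 2 + 2 * (4 * ((t : ℤ) + 1) + 3) * (N + j) * (N - 1 - j) +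
      4 * (1 + ((m : ℤ) + 1) + (t + 1)) * (N + j) + 4 * (1 - ((m : ℤ) + 1) + (t + 1)) * (N - 1 - j)
      - 4 * ((t : ℤ) + 1) - 4 * ((m : ℤ) + 1) + 3 + 4 * u * (N + j + (N - 1 - j) + 1) =
      8 * (((t + 2) * N ^ 2 - (t + 1)) + (-(2 * t + 3) * triangle j + (m + 1) * j) + N * u) := by
    linear_combination 4 * (2 * (t : ℤ) + 3) * two_mul_triangle j
  rw [heckeTermM3, hsign, hexp, Int.mul_ediv_cancel_left _ (by norm_num), thetaCoeff, zpow_add₀ hq,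
    zpow_add₀ hq, zpow_add₀ hq, zpow_mul q N, zpow_natCast, zpow_natCast, mul_pow]
  ring

theorem sub_le_heckeExponent {T M : ℤ} (hM : 1 ≤ M) (hMT : M ≤ T) {r s u : ℕ} (hrs : 1 ≤ r + s) :
    (r + s + u : ℤ) - (T + M) ≤
      (r ^ 2 + s ^ 2 + 2 * (4 * T + 3) * r * s + 4 * (1 + M + T) * r + 4 * (1 - M + T) * s
        - 4 * T - 4 * M + 3 + 4 * u * (r + s + 1)) / 8 := by
  rw [Int.le_ediv_iff_mul_le (by norm_num)]
  have h₁ : (0 : ℤ) ≤ (T - M) * s := mul_nonneg (by omega) (by omega)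
  have h₂ : (0 : ℤ) ≤ (T + M - 2) * r := mul_nonneg (by omega) (by omega)
  have h₃ : (0 : ℤ) ≤ (4 * T + 3) * (r * s) := mul_nonneg (by omega) (by positivity)
  have h₄ : (0 : ℤ) ≤ u * (r + s - 1) := mul_nonneg (by omega) (by omega)
  nlinarith [sq_nonneg ((s : ℤ) - 2), sq_nonneg (r : ℤ)]

theorem norm_heckeTermM3_le (hq : q ≠ 0) (hq₁ : ‖q‖ < 1) {T M : ℤ} (hM : 1 ≤ M) (hMT : M ≤ T)
    {r s : ℕ} (hrs : 1 ≤ r + s) (u : ℕ) :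
    ‖heckeTermM3 q x T M (r, s, u)‖ ≤
      ‖q‖ ^ (-(T + M)) * (‖q‖ ^ r * (‖q‖ ^ s * (‖x‖ * ‖q‖) ^ u)) := by
  have hq₀ : 0 < ‖q‖ := norm_pos_iff.2 hq
  rw [heckeTermM3, norm_mul, norm_mul, norm_zpow, norm_neg, norm_one, one_zpow, one_mul,
    zpow_natCast, norm_pow, norm_zpow]
  calc
    _ ≤ ‖x‖ ^ u * ‖q‖ ^ ((r + s + u : ℤ) - (T + M)) := by
      gcongr ?_ * ?_
      exact zpow_le_zpow_right_of_le_one₀ hq₀ hq₁.le (sub_le_heckeExponent hM hMT hrs)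
    _ = ‖q‖ ^ (-(T + M)) * (‖q‖ ^ r * (‖q‖ ^ s * (‖x‖ * ‖q‖) ^ u)) := by
      rw [sub_eq_add_neg, zpow_add₀ hq₀.ne', mul_pow]
      norm_cast
      ring

theorem summable_norm_heckeTermM3_nonneg (hq : q ≠ 0) (hq₁ : ‖q‖ < 1) (hx : ‖x‖ * ‖q‖ < 1)
    {T M : ℤ} (hM : 1 ≤ M) (hMT : M ≤ T) :
    Summable fun p : NonnegTriple => ‖heckeTermM3 q x T M p.1‖ := by
  have hρ := summable_geometric_of_lt_one (norm_nonneg q) hq₁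
  have hσ := summable_geometric_of_lt_one (by positivity) hx
  have hsum : Summable fun p : ℕ × ℕ × ℕ =>
      ‖q‖ ^ (-(T + M)) * (‖q‖ ^ p.1 * (‖q‖ ^ p.2.1 * (‖x‖ * ‖q‖) ^ p.2.2)) :=
    (hρ.mul_of_nonneg (hρ.mul_of_nonneg hσ (fun _ => by positivity) fun _ => by positivity)
      (fun _ => by positivity) fun _ => by positivity).mul_left _
  have hinj : Function.Injective fun p : NonnegTriple =>
      (p.1.1.toNat, p.1.2.1.toNat, p.1.2.2.toNat) := by
    rintro ⟨⟨r, s, u⟩, h, _⟩ ⟨⟨r', s', u'⟩, h', _⟩ heq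
    simp only [Prod.mk.injEq, Subtype.mk.injEq] at heq h h' ⊢
    omega
  refine .of_nonneg_of_le (fun _ => norm_nonneg _) ?_ (hsum.comp_injective hinj)
  rintro ⟨⟨r, s, u⟩, ⟨hr, hs, hu⟩, hrs⟩
  lift r to ℕ using hr
  lift s to ℕ using hs
  lift u to ℕ using hu
  exact norm_heckeTermM3_le hq hq₁ hM hMT (by dsimp only at hrs; omega) u

/-- The shift `(r, s, u) ↦ (r, s, u + a)` of the summation index; `a = 1` occurs because the
reflection `reflectEquiv` turns `x ^ u` into `x⁻¹ ^ (u + 1)`. -/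
def NonnegTriple.addThird (a : ℕ) (p : NonnegTriple) : NonnegTriple :=
  ⟨(p.1.1, p.1.2.1, p.1.2.2 + a), ⟨p.2.1.1, p.2.1.2.1, add_nonneg p.2.1.2.2 a.cast_nonneg⟩, p.2.2⟩

theorem NonnegTriple.injective_addThird (a : ℕ) : Function.Injective (addThird a) := by
  rintro ⟨⟨r, s, u⟩, _⟩ ⟨⟨r', s', u'⟩, _⟩ h
  simpa only [addThird, Prod.mk.injEq, Subtype.mk.injEq, add_left_inj] using h

theorem summable_norm_heckeTermM3_nonneg_add (hq : q ≠ 0) (hq₁ : ‖q‖ < 1) (hx : ‖x‖ * ‖q‖ < 1)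
    {T M : ℤ} (hM : 1 ≤ M) (hMT : M ≤ T) (a : ℕ) :
    Summable fun p : NonnegTriple => ‖heckeTermM3 q x T M (p.1.1, p.1.2.1, p.1.2.2 + a)‖ :=
  ((summable_norm_heckeTermM3_nonneg hq hq₁ hx hM hMT).comp_injective
    (NonnegTriple.injective_addThird a) :)

theorem summable_norm_heckeTermM3_neg (hq : q ≠ 0) (hq₁ : ‖q‖ < 1) (hx : ‖x⁻¹‖ * ‖q‖ < 1)
    {T M : ℤ} (hM : 1 ≤ M) (hMT : M ≤ T) :
    Summable fun p : NegTriple => ‖heckeTermM3 q x T M p.1‖ := by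
  rw [← NonnegTriple.reflectEquiv.summable_iff]
  exact (summable_norm_heckeTermM3_nonneg_add hq hq₁ hx hM hMT 1).congr fun p =>
    congrArg norm (heckeTermM3_reflect q x T M p.1.1 p.1.2.1 p.1.2.2).symm

theorem tsum_heckeTermM3_neg (q x : ℂ) (T M : ℤ) :
    ∑' p : NegTriple, heckeTermM3 q x T M p.1 =
      ∑' p : NonnegTriple, heckeTermM3 q x⁻¹ T M (p.1.1, p.1.2.1, p.1.2.2 + 1) := by
  rw [← NonnegTriple.reflectEquiv.tsum_eq]
  exact tsum_congr fun p => heckeTermM3_reflect q x T M _ _ _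

theorem hasSum_finset_mul_geometric {ι : Type*} (s : Finset ι) (f : ι → ℂ) {z : ℂ}
    (hz : ‖z‖ < 1) :
    HasSum (fun p : s × ℕ => f p.1 * z ^ p.2) ((∑ i ∈ s, f i) * (1 - z)⁻¹) :=
  (s.hasSum f).mul (hasSum_geometric_of_norm_lt_one hz) <|
    summable_mul_of_summable_norm Summable.of_finite (summable_norm_geometric_of_norm_lt_one hz)

theorem hasSum_heckeTermM3_nonneg_add (hq : q ≠ 0) (hq₁ : ‖q‖ < 1) (hx : ‖x‖ * ‖q‖ < 1)
    (hmt : m ≤ t) (a : ℕ) :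
    HasSum (fun n : ℕ => q ^ (((t : ℤ) + 2) * ((n + 1 : ℕ) : ℤ) ^ 2 - (t + 1)) *
        partialTheta q t m (n + 1) * (x * q ^ (n + 1)) ^ a * (1 - x * q ^ (n + 1))⁻¹)
      (∑' p : NonnegTriple, heckeTermM3 q x (t + 1) (m + 1) (p.1.1, p.1.2.1, p.1.2.2 + a)) := by
  have hsum := (summable_norm_heckeTermM3_nonneg_add hq hq₁ hx (T := t + 1) (M := m + 1)
    (by omega) (by omega) a).of_norm.hasSum
  rw [← (Equiv.ofBijective _ NonnegTriple.bijective_ofSigma).hasSum_iff] at hsum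
  refine hsum.sigma fun n => ?_
  have hgeom := (hasSum_finset_mul_geometric (Ico (-((n + 1 : ℕ) : ℤ)) (n + 1 : ℕ))
    (fun j => thetaCoeff q (-(2 * t + 3)) j * q ^ ((m + 1) * j))
    (norm_mul_pow_succ_lt_one hq₁ hx n)).mul_left
      (q ^ (((t : ℤ) + 2) * ((n + 1 : ℕ) : ℤ) ^ 2 - (t + 1)) * (x * q ^ (n + 1)) ^ a)
  rw [← partialTheta, ← mul_assoc, mul_right_comm (q ^ _)] at hgeom
  refine hgeom.congr_fun fun ⟨j, u⟩ => ?_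
  have hterm := heckeTermM3_add_sub (x := x) (t := t) (m := m) hq (n + 1 : ℕ) j (u + a)
  rw [zpow_natCast, pow_add, Nat.cast_add u a] at hterm
  refine hterm.trans ?_
  ring

theorem one_sub_sq_div_eq_add {y x : ℂ} (hx : x ≠ 0) (h₁ : 1 - x * y ≠ 0) (h₂ : 1 - x⁻¹ * y ≠ 0) :
    (1 - y ^ 2) / ((1 - x * y) * (1 - x⁻¹ * y)) =
      (1 - x * y)⁻¹ + x⁻¹ * y * (1 - x⁻¹ * y)⁻¹ := by
  rw [div_eq_iff (mul_ne_zero h₁ h₂), add_mul, inv_mul_cancel_left₀ h₁, mul_comm (1 - x * y),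
    mul_assoc, inv_mul_cancel_left₀ h₂]
  linear_combination y ^ 2 * mul_inv_cancel₀ hx

theorem hasSum_appellCoeff (hq : q ≠ 0) (hq₁ : ‖q‖ < 1) (hx₀ : x ≠ 0) (hx : ‖x‖ * ‖q‖ < 1)
    (hx' : ‖x⁻¹‖ * ‖q‖ < 1) (hmt : m ≤ t) :
    HasSum (fun n => q ^ (-(t : ℤ) - 1) * appellCoeff q x t m n)
      (∑' p : NonnegTriple, heckeTermM3 q x (t + 1) (m + 1) p.1 +
        ∑' p : NegTriple, heckeTermM3 q x (t + 1) (m + 1) p.1) := by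
  have hpos := hasSum_heckeTermM3_nonneg_add hq hq₁ hx hmt 0
  have hneg := hasSum_heckeTermM3_nonneg_add hq hq₁ hx' hmt 1
  simp only [Nat.cast_zero, add_zero, pow_zero, mul_one] at hpos
  simp only [Nat.cast_one, pow_one, ← tsum_heckeTermM3_neg] at hneg
  refine (hpos.add hneg).congr_fun fun n => ?_
  have hpow : q ^ (((t : ℤ) + 2) * ((n + 1 : ℕ) : ℤ) ^ 2 - (t + 1)) =
      q ^ (-(t : ℤ) - 1) * q ^ (((t : ℤ) + 2) * ((n + 1 : ℕ) : ℤ) ^ 2) := by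
    rw [← zpow_add₀ hq]; congr 1; ring
  rw [appellCoeff, mul_comm 2, pow_mul, one_sub_sq_div_eq_add hx₀
    (one_sub_ne_zero_of_norm_lt_one (norm_mul_pow_succ_lt_one hq₁ hx n))
    (one_sub_ne_zero_of_norm_lt_one (norm_mul_pow_succ_lt_one hq₁ hx' n)), hpow]
  ring

end HeckeSums

/-- Hecke-type triple-sum expansion of `U_t^{(m)}(-x;q)` (the paper's
`t, m` are `t+1, m+1` here), valid for `|q| < |x| < |q|⁻¹`, with absolute convergence
of each series. -/
theorem stmt16 (t m : ℕ) (hmt : m ≤ t) (q x : ℂ)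
    (hq0 : 0 < ‖q‖) (hq1 : ‖q‖ < 1)
    (hx1 : ‖q‖ < ‖x‖) (hx2 : ‖x‖ < (‖q‖)⁻¹) :
    Summable (fun k : {k : Fin (t+1) → ℕ //
        (∀ i : Fin t, k i.castSucc ≤ k i.succ) ∧ 1 ≤ k ⟨m, by omega⟩} =>
      ‖UtTermM q x t m k.1‖) ∧
    Summable (fun p : {p : ℤ × ℤ × ℤ // (0 ≤ p.1 ∧ 0 ≤ p.2.1 ∧ 0 ≤ p.2.2) ∧
        p.1 % 2 ≠ p.2.1 % 2} =>
      ‖heckeTermM3 q x ((t : ℤ) + 1) ((m : ℤ) + 1) p.1‖) ∧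
    Summable (fun p : {p : ℤ × ℤ × ℤ // (p.1 < 0 ∧ p.2.1 < 0 ∧ p.2.2 < 0) ∧
        p.1 % 2 ≠ p.2.1 % 2} =>
      ‖heckeTermM3 q x ((t : ℤ) + 1) ((m : ℤ) + 1) p.1‖) ∧
    q ^ (-(t : ℤ) - 1) *
      ∑' k : {k : Fin (t+1) → ℕ //
          (∀ i : Fin t, k i.castSucc ≤ k i.succ) ∧ 1 ≤ k ⟨m, by omega⟩},
        UtTermM q x t m k.1 =
    -(qPochInf q (x * q) * qPochInf q (q / x) / (qPochInf q q) ^ 2) *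
      ((∑' p : {p : ℤ × ℤ × ℤ // (0 ≤ p.1 ∧ 0 ≤ p.2.1 ∧ 0 ≤ p.2.2) ∧
            p.1 % 2 ≠ p.2.1 % 2},
          heckeTermM3 q x ((t : ℤ) + 1) ((m : ℤ) + 1) p.1) +
       (∑' p : {p : ℤ × ℤ × ℤ // (p.1 < 0 ∧ p.2.1 < 0 ∧ p.2.2 < 0) ∧
            p.1 % 2 ≠ p.2.1 % 2},
          heckeTermM3 q x ((t : ℤ) + 1) ((m : ℤ) + 1) p.1)) := by
  have hx₀ : 0 < ‖x‖ := hq0.trans hx1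
  have hq : q ≠ 0 := norm_pos_iff.1 hq0
  have hx : x ≠ 0 := norm_pos_iff.1 hx₀
  have hxq : ‖x‖ * ‖q‖ < 1 := by rwa [← lt_div_iff₀ hq0, one_div]
  have hxq' : ‖x⁻¹‖ * ‖q‖ < 1 := by rwa [norm_inv, inv_mul_lt_one₀ hx₀]
  refine ⟨(summable_norm_UtTermM hq hq1 x t m).subtype _,
    summable_norm_heckeTermM3_nonneg hq hq1 hxq (by omega) (by omega),
    summable_norm_heckeTermM3_neg hq hq1 hxq' (by omega) (by omega), ?_⟩
  have hcoeff := hasSum_appellCoeff hq hq1 hx hxq hxq' hmt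
  have hsum : Summable (appellCoeff q x t m) :=
    (summable_mul_left_iff (zpow_ne_zero _ hq)).1 hcoeff.summable
  have hright := (((tendsto_qPoch hq1 (x * q)).mul (tendsto_qPoch hq1 (q / x))).mul
    (tendsto_sum_mul_baileyKernel hq1 hsum)).neg
  have hbox := sum_box_UtTermM hq (fun h => hq1.ne h.norm_eq_one) hx
    (fun n => one_sub_ne_zero_of_norm_lt_one (norm_mul_pow_succ_lt_one hq1 hxq n))
    (fun n => one_sub_ne_zero_of_norm_lt_one (norm_mul_pow_succ_lt_one hq1 hxq' n)) hmt
  rw [tendsto_nhds_unique (tendsto_sum_box_UtTermM hq hq1 x m ⟨m, by omega⟩)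
    (hright.congr fun L => (hbox L).symm), ← hcoeff.tsum_eq, tsum_mul_left]
  ring
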